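/- arXiv:1501.01257 — 2 statements merged into one kernel-verified Lean document; each statement's English description precedes it below -/
import Mathlib

section
/- Let n, ℓ ∈ ℕ with ℓ ≥ 1. There exists a constant C = C(ℓ,n) such that for every u ∈ W^{2ℓ−1,1}_loc(ℝⁿ): | Σ_{|α| ≤ ℓ−1} [(2ℓ−2−|α|)! / ((ℓ−1−|α|)! α!)] · (y−x)^α / |y−x|^{2ℓ−1} · [(−1)^{|α|} D^α u(y) − D^α u(x)] | ≤ C ( M(|∇^{2ℓ−1}u|)(x) + M(|∇^{2ℓ−1}u|)(y) ) for a.e. x, y ∈ ℝⁿ, where M is the Hardy–Littlewood maximal operator. -/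
open Set Finset MeasureTheory
open scoped ENNReal NNReal

/-- The finite set of multi-indices α : Fin n → ℕ with |α| = Σ α i ≤ d. -/
def mIdxLe (n d : ℕ) : Finset (Fin n → ℕ) :=
  ((Finset.univ : Finset (Fin n → Fin (d+1))).image fun a i => ((a i : ℕ))).filter
    fun α => ∑ i, α i ≤ d

/-- The Hardy–Littlewood maximal function (over all balls containing the point). -/
noncomputable def maxFn {n : ℕ} (f : EuclideanSpace ℝ (Fin n) → ℝ)
    (x : EuclideanSpace ℝ (Fin n)) : ℝ≥0∞ :=
  ⨆ (c : EuclideanSpace ℝ (Fin n)) (r : ℝ) (_ : x ∈ Metric.ball c r),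
    (volume (Metric.ball c r))⁻¹ * ∫⁻ y in Metric.ball c r, (‖f y‖₊ : ℝ≥0∞)

/-- v is the weak partial derivative of u in direction i. -/
def IsWeakDeriv {n : ℕ} (i : Fin n) (u v : EuclideanSpace ℝ (Fin n) → ℝ) : Prop :=
  ∀ φ : EuclideanSpace ℝ (Fin n) → ℝ, ContDiff ℝ (⊤ : ℕ∞) φ → HasCompactSupport φ →
    ∫ x, u x * fderiv ℝ φ x (EuclideanSpace.single i (1:ℝ)) = - ∫ x, v x * φ x

/-! Put `N = ℓ - 1`. The terms of order `k` add up to a multiple of the `k`-th directional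
derivative along `y - x`, and the multiples that occur are the coefficients of the numerator `P` of
the `[N/N]` Padé approximant of `exp`, so that `P(-t) exp(t) = P(t) + O(t ^ (2N + 1))`. Read with
`t` the symbol of that derivative, this says that the two-point combination annihilates every
polynomial of degree at most `2N`. Subtracting the Taylor polynomial of `u` about an auxiliary
point `z` therefore leaves a combination of Taylor remainders at `x` and `y`.

The remainders are integrals of `∇^(2N + 1) u` over the segments from `z` to `x` and `y`. Averaging
over `z` in the ball of radius `2 |y - x|` about `x` bounds them by maximal functions, because the
homothety `z ↦ z + t (x - z)` maps that ball onto a smaller ball which still contains `x`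
(and likewise for `y`).

For Sobolev functions the estimate is applied to mollifications. Their maximal functions are
bounded uniformly by that of the original function, and they converge almost everywhere. -/

section Pade

lemma fwdDiff_iter_choose_of_lt {N p : ℕ} (h : N < p) :
    (fwdDiff 1)^[p] (fun x : ℕ => (x.choose N : ℤ)) = 0 := by
  obtain ⟨j, rfl⟩ := Nat.exists_eq_add_of_lt h
  have hN : (fwdDiff 1)^[N + 1] (fun x : ℕ => (x.choose N : ℤ)) = 0 := by
    have hone := fwdDiff_iter_choose 0 N
    rw [add_zero] at hone
    rw [Function.iterate_succ_apply', hone]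
    ext
    simp [fwdDiff]
  rw [show N + j + 1 = j + (N + 1) by ring, Function.iterate_add_apply, hN]
  exact Function.iterate_fixed (fwdDiff_const (1 : ℕ) (0 : ℤ)) j

lemma fwdDiff_iter_choose_central {N p : ℕ} (hp : p ≤ 2 * N) :
    (fwdDiff 1)^[p] (fun x : ℕ => (x.choose N : ℤ)) (2 * N - p) = (2 * N - p).choose N := by
  rcases le_or_gt p N with h | h
  · obtain ⟨j, rfl⟩ := Nat.exists_eq_add_of_le h
    rw [fwdDiff_iter_choose, show 2 * (p + j) - p = p + j + j by omega]
    change (((p + j + j).choose j : ℕ) : ℤ) = _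
    exact_mod_cast (Nat.choose_symm_add (a := p + j) (b := j)).symm
  · rw [fwdDiff_iter_choose_of_lt h, Nat.choose_eq_zero_of_lt (by omega)]
    rfl

lemma sum_neg_one_pow_mul_choose_mul_choose {N p : ℕ} (hp : p ≤ 2 * N) :
    ∑ i ∈ range (p + 1), (-1 : ℤ) ^ i * p.choose i * (2 * N - i).choose N
      = (2 * N - p).choose N := by
  rw [← fwdDiff_iter_choose_central hp, fwdDiff_iter_eq_sum_shift, ← sum_range_reflect]
  refine sum_congr rfl fun i hi => ?_
  have hip : i ≤ p := mem_range_succ_iff.1 hi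
  rw [show p + 1 - 1 - i = p - i by omega, show 2 * N - (p - i) = 2 * N - p + i by omega,
    Nat.choose_symm hip]
  simp

/-- The numerator coefficients of the `[N/N]` Padé approximant of `exp`, scaled so that
`padeCoeff N 0 = (2 * N)! / N!`. The binomial coefficient makes them vanish for `N < k ≤ 2 * N`;
values at `k > 2 * N` are junk. -/
def padeCoeff (N k : ℕ) : ℚ :=
  N.factorial * (2 * N - k).choose N / k.factorial

lemma padeCoeff_nonneg (N k : ℕ) : 0 ≤ padeCoeff N k := by
  unfold padeCoeff
  positivity

lemma padeCoeff_eq_zero {N k : ℕ} (hNk : N < k) (hk : k ≤ 2 * N) : padeCoeff N k = 0 := by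
  rw [padeCoeff, Nat.choose_eq_zero_of_lt (by omega)]
  simp

lemma padeCoeff_eq_factorial_div {N k : ℕ} (h : k ≤ N) :
    padeCoeff N k = (2 * N - k).factorial / ((N - k).factorial * k.factorial) := by
  have hchoose := Nat.choose_mul_factorial_mul_factorial (n := 2 * N - k) (k := N) (by omega)
  rw [show 2 * N - k - N = N - k by omega] at hchoose
  rw [padeCoeff, ← hchoose]
  push_cast
  field_simp

lemma sum_antidiagonal_padeCoeff_div_factorial {N p : ℕ} (hp : p ≤ 2 * N) :
    ∑ ij ∈ antidiagonal p, (-1) ^ ij.1 * padeCoeff N ij.1 / ij.2.factorial = padeCoeff N p := by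
  have hbinom := congrArg (Int.cast : ℤ → ℚ) (sum_neg_one_pow_mul_choose_mul_choose hp)
  push_cast at hbinom
  rw [Nat.sum_antidiagonal_eq_sum_range_succ
      fun i j => (-1) ^ i * padeCoeff N i / (j.factorial : ℚ), padeCoeff, ← hbinom, mul_sum,
    sum_div]
  refine sum_congr rfl fun i hi => ?_
  rw [padeCoeff, Nat.cast_choose ℚ (mem_range_succ_iff.1 hi)]
  field_simp

variable {R : Type*} [CommRing R] [Algebra ℚ R]

/-- The Padé numerator of `exp`, as the power series `∑ padeCoeff N k • (a t) ^ k` in `t`. -/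
noncomputable def padeSeries (N : ℕ) (a : R) : PowerSeries R :=
  PowerSeries.rescale a (PowerSeries.mk fun k => algebraMap ℚ R (padeCoeff N k))

lemma coeff_padeSeries (N k : ℕ) (a : R) :
    PowerSeries.coeff k (padeSeries N a) = padeCoeff N k • a ^ k := by
  rw [padeSeries, PowerSeries.coeff_rescale, PowerSeries.coeff_mk, Algebra.smul_def, mul_comm]

lemma coeff_rescale_exp (j : ℕ) (a : R) :
    PowerSeries.coeff j (PowerSeries.rescale a (PowerSeries.exp R))
      = (j.factorial : ℚ)⁻¹ • a ^ j := by
  rw [PowerSeries.coeff_rescale, PowerSeries.coeff_exp, one_div, Algebra.smul_def, mul_comm]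

lemma coeff_padeSeries_neg_mul_rescale_exp {N p : ℕ} (hp : p ≤ 2 * N) (a : R) :
    PowerSeries.coeff p (padeSeries N (-a) * PowerSeries.rescale a (PowerSeries.exp R))
      = PowerSeries.coeff p (padeSeries N a) := by
  rw [coeff_padeSeries, ← sum_antidiagonal_padeCoeff_div_factorial hp, sum_smul,
    PowerSeries.coeff_mul]
  refine sum_congr rfl fun ij hij => ?_
  rw [coeff_padeSeries, coeff_rescale_exp, ← mem_antidiagonal.1 hij, neg_pow, pow_add]
  simp only [Algebra.smul_def, map_mul, map_pow, map_neg, map_one, div_eq_mul_inv]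
  ring

lemma sum_antidiagonal_padeCoeff_smul_eq_zero {N d : ℕ} (hd : d ≤ 2 * N) (a b : R) :
    ∑ kj ∈ antidiagonal d, (padeCoeff N kj.1 / kj.2.factorial) •
      (((-a) ^ kj.1 * (a + b) ^ kj.2) - a ^ kj.1 * b ^ kj.2) = 0 := by
  have hexp : PowerSeries.coeff d (padeSeries N (-a) *
        PowerSeries.rescale (a + b) (PowerSeries.exp R))
      = PowerSeries.coeff d (padeSeries N a * PowerSeries.rescale b (PowerSeries.exp R)) := by
    rw [← PowerSeries.exp_mul_exp_eq_exp_add, ← mul_assoc, PowerSeries.coeff_mul,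
      PowerSeries.coeff_mul]
    refine sum_congr rfl fun ij hij => ?_
    rw [coeff_padeSeries_neg_mul_rescale_exp ((HasAntidiagonal.antidiagonal.fst_le hij).trans hd)]
  rw [← sub_eq_zero, PowerSeries.coeff_mul, PowerSeries.coeff_mul, ← sum_sub_distrib] at hexp
  rw [← hexp]
  refine sum_congr rfl fun kj _ => ?_
  simp only [coeff_padeSeries, coeff_rescale_exp, smul_mul_smul_comm, ← smul_sub, div_eq_mul_inv]

lemma sum_padeCoeff_smul_eq_zero (N : ℕ) (a b : R) :
    ∑ k ∈ range (2 * N + 1), ∑ j ∈ range (2 * N + 1 - k), (padeCoeff N k / j.factorial) •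
      (((-a) ^ k * (a + b) ^ j) - a ^ k * b ^ j) = 0 := by
  rw [← sum_range_diag_flip (2 * N + 1) fun k j => (padeCoeff N k / j.factorial) •
      (((-a) ^ k * (a + b) ^ j) - a ^ k * b ^ j)]
  refine sum_eq_zero fun d hd => ?_
  rw [← sum_antidiagonal_padeCoeff_smul_eq_zero (mem_range_succ_iff.1 hd) a b,
    Nat.sum_antidiagonal_eq_sum_range_succ fun k j => (padeCoeff N k / (j.factorial : ℚ)) •
      (((-a) ^ k * (a + b) ^ j) - a ^ k * b ^ j)]

end Pade

section Taylor

variable {E : Type*} [NormedAddCommGroup E] [NormedSpace ℝ E] {F : ℕ → ℝ → E} {K : ℕ}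

lemma iteratedDeriv_eq_of_hasDerivAt
    (hF : ∀ k ≤ K, ∀ t, HasDerivAt (F k) (F (k + 1) t) t) {k : ℕ} (hk : k ≤ K + 1) :
    iteratedDeriv k (F 0) = F k := by
  induction k with
  | zero => exact iteratedDeriv_zero
  | succ k ih =>
    rw [iteratedDeriv_succ, ih (by omega)]
    exact funext fun t => (hF k (by omega) t).deriv

lemma contDiff_of_hasDerivAt (hF : ∀ k ≤ K, ∀ t, HasDerivAt (F k) (F (k + 1) t) t)
    (hcont : Continuous (F (K + 1))) : ContDiff ℝ (K + 1 : ℕ) (F 0) := by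
  refine contDiff_nat_iff_iteratedDeriv.2 ⟨fun k hk => ?_, fun k hk => ?_⟩
  · rw [iteratedDeriv_eq_of_hasDerivAt hF hk]
    rcases hk.eq_or_lt with rfl | hlt
    · exact hcont
    · exact continuous_iff_continuousAt.2 fun t => (hF k (by omega) t).continuousAt
  · rw [iteratedDeriv_eq_of_hasDerivAt hF hk.le]
    exact fun t => (hF k (by omega) t).differentiableAt

variable [CompleteSpace E]

lemma sub_taylor_sum_eq_integral (hF : ∀ k ≤ K, ∀ t, HasDerivAt (F k) (F (k + 1) t) t)
    (hcont : Continuous (F (K + 1))) :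
    F 0 1 - ∑ j ∈ range (K + 1), (j.factorial : ℝ)⁻¹ • F j 0
      = ∫ t in (0 : ℝ)..1, ((1 - t) ^ K / K.factorial) • F (K + 1) t := by
  have hsmooth := contDiff_of_hasDerivAt hF hcont
  have hderiv : ∀ k ≤ K + 1, ∀ t ∈ uIcc (0 : ℝ) 1,
      iteratedDerivWithin k (F 0) (uIcc 0 1) t = F k t := fun k hk t ht => by
    rw [iteratedDerivWithin_eq_iteratedDeriv (uniqueDiffOn_uIcc zero_ne_one)
      (hsmooth.contDiffAt.of_le (by exact_mod_cast hk)) ht, iteratedDeriv_eq_of_hasDerivAt hF hk]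
  have htaylor := taylor_integral_remainder (hsmooth.contDiffOn (s := uIcc (0 : ℝ) 1))
  rw [taylor_within_apply] at htaylor
  rw [← intervalIntegral.integral_congr fun t ht =>
    congrArg (((1 - t) ^ K / (K.factorial : ℝ)) • ·) (hderiv _ le_rfl t ht), ← htaylor]
  congr 1
  refine sum_congr rfl fun j hj => ?_
  rw [hderiv j (mem_range.1 hj).le 0 left_mem_uIcc]
  simp

lemma enorm_sub_taylor_sum_le (hF : ∀ k ≤ K, ∀ t, HasDerivAt (F k) (F (k + 1) t) t)
    (hcont : Continuous (F (K + 1))) :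
    ‖F 0 1 - ∑ j ∈ range (K + 1), (j.factorial : ℝ)⁻¹ • F j 0‖ₑ
      ≤ ∫⁻ t in Ioo (0 : ℝ) 1, ‖F (K + 1) t‖ₑ := by
  rw [sub_taylor_sum_eq_integral hF hcont, intervalIntegral.integral_of_le zero_le_one,
    integral_Ioc_eq_integral_Ioo]
  refine (enorm_integral_le_lintegral_enorm _).trans
    (setLIntegral_mono' measurableSet_Ioo fun t ht => ?_)
  have hkernel : ‖(1 - t) ^ K / (K.factorial : ℝ)‖ ≤ 1 := by
    rw [norm_div, norm_pow, Real.norm_of_nonneg (sub_nonneg.2 ht.2.le), Real.norm_natCast]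
    exact div_le_one_of_le₀ ((pow_le_one₀ (sub_nonneg.2 ht.2.le) (by linarith [ht.1])).trans
      (by exact_mod_cast K.factorial_pos)) (by positivity)
  rw [enorm_le_iff_norm_le, norm_smul]
  exact mul_le_of_le_one_left (norm_nonneg _) hkernel

end Taylor

section Jets

/-- `jetEval J q` is the value of the constant-coefficient operator `q(D)` on the jet `J`, where
`J α` stands for the derivative `D^α u` at a fixed point. -/
noncomputable def jetEval {ι : Type*} (J : (ι → ℕ) → ℝ) : MvPolynomial ι ℝ →ₗ[ℝ] ℝ :=
  (MvPolynomial.basisMonomials ι ℝ).constr ℝ fun α => J α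

/-- The symbol `∑ i, h i * X i` of the directional derivative along `h`. -/
noncomputable def linForm {ι : Type*} [Fintype ι] (h : EuclideanSpace ℝ ι) : MvPolynomial ι ℝ :=
  ∑ i, MvPolynomial.C (h i) * MvPolynomial.X i

variable {ι : Type*}

lemma jetEval_monomial (J : (ι → ℕ) → ℝ) (α : ι →₀ ℕ) (c : ℝ) :
    jetEval J (MvPolynomial.monomial α c) = c * J α := by
  have hbasis : MvPolynomial.monomial α c = c • MvPolynomial.basisMonomials ι ℝ α := by
    simp [MvPolynomial.smul_monomial]
  rw [hbasis, map_smul, jetEval, Module.Basis.constr_basis, smul_eq_mul]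

lemma jetEval_eq_sum (J : (ι → ℕ) → ℝ) (q : MvPolynomial ι ℝ) :
    jetEval J q = ∑ α ∈ q.support, q.coeff α * J α := by
  conv_lhs => rw [MvPolynomial.as_sum q, map_sum]
  simp only [jetEval_monomial]

lemma jetEval_X_mul [DecidableEq ι] (J : (ι → ℕ) → ℝ) (i : ι) (q : MvPolynomial ι ℝ) :
    jetEval J (MvPolynomial.X i * q) = jetEval (fun α => J (α + Pi.single i 1)) q := by
  induction q using MvPolynomial.induction_on' with
  | monomial α c =>
    rw [MvPolynomial.X, MvPolynomial.monomial_mul, one_mul, add_comm, jetEval_monomial,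
      jetEval_monomial, Finsupp.coe_add, Finsupp.single_eq_pi_single]
  | add p q hp hq => rw [mul_add, map_add, map_add, hp, hq]

variable [Fintype ι]

lemma linForm_zero : linForm (0 : EuclideanSpace ℝ ι) = 0 := by
  simp [linForm]

lemma linForm_add (h v : EuclideanSpace ℝ ι) : linForm (h + v) = linForm h + linForm v := by
  simp [linForm, add_mul, sum_add_distrib]

lemma isHomogeneous_linForm (h : EuclideanSpace ℝ ι) : (linForm h).IsHomogeneous 1 :=
  MvPolynomial.IsHomogeneous.sum _ _ _ fun _ _ => MvPolynomial.isHomogeneous_C_mul_X _ _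

lemma isHomogeneous_linForm_pow (h : EuclideanSpace ℝ ι) (k : ℕ) :
    (linForm h ^ k).IsHomogeneous k := by
  simpa using (isHomogeneous_linForm h).pow k

lemma isHomogeneous_linForm_pow_mul (h : EuclideanSpace ℝ ι) (j : ℕ) {q : MvPolynomial ι ℝ}
    {d : ℕ} (hq : q.IsHomogeneous d) : (linForm h ^ j * q).IsHomogeneous (j + d) :=
  (isHomogeneous_linForm_pow h j).mul hq

lemma sum_eq_of_mem_support {R : Type*} [CommSemiring R] {q : MvPolynomial ι R} {d : ℕ}
    (hq : q.IsHomogeneous d) {α : ι →₀ ℕ} (hα : α ∈ q.support) : ∑ i, α i = d := by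
  rw [← hq (MvPolynomial.mem_support_iff.1 hα), Finsupp.weight_apply,
    Finsupp.sum_fintype _ _ (by simp)]
  simp

lemma jetEval_linForm_mul [DecidableEq ι] (J : (ι → ℕ) → ℝ) (h : EuclideanSpace ℝ ι)
    (q : MvPolynomial ι ℝ) :
    jetEval J (linForm h * q) = ∑ i, h i * jetEval (fun α => J (α + Pi.single i 1)) q := by
  rw [linForm, sum_mul, map_sum]
  refine sum_congr rfl fun i _ => ?_
  rw [mul_assoc, MvPolynomial.C_mul', map_smul, jetEval_X_mul, smul_eq_mul]

lemma jetEval_linForm_pow [DecidableEq ι] (J : (ι → ℕ) → ℝ) (h : EuclideanSpace ℝ ι) (k : ℕ) :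
    jetEval J (linForm h ^ k) = ∑ α ∈ (univ : Finset ι).piAntidiag k,
      (Nat.multinomial univ α : ℝ) * (∏ i, h i ^ α i) * J α := by
  rw [linForm, sum_pow_eq_sum_piAntidiag, map_sum]
  refine sum_congr rfl fun α _ => ?_
  have hmonomial : (Nat.multinomial univ α : MvPolynomial ι ℝ) *
        ∏ i, (MvPolynomial.C (h i) * MvPolynomial.X i) ^ α i
      = MvPolynomial.monomial (Finsupp.equivFunOnFinite.symm α)
          ((Nat.multinomial univ α : ℝ) * ∏ i, h i ^ α i) := by
    rw [MvPolynomial.monomial_eq, Finsupp.prod_fintype _ _ (by simp)]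
    simp [mul_pow, prod_mul_distrib, mul_assoc]
  rw [hmonomial, jetEval_monomial]
  rfl

lemma abs_jetEval_prod_linForm_le {g : ℝ} (s : Multiset (EuclideanSpace ℝ ι))
    {J : (ι → ℕ) → ℝ} (hJ : ∀ α, ∑ i, α i = Multiset.card s → |J α| ≤ g) :
    |jetEval J (s.map linForm).prod| ≤ (s.map fun h => Fintype.card ι * ‖h‖).prod * g := by
  classical
  induction s using Multiset.induction_on generalizing J with
  | empty =>
    have hone : jetEval J 1 = J 0 := by simpa using jetEval_monomial J 0 1
    simpa [hone] using hJ 0 (by simp)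
  | cons h s ih =>
    rw [Multiset.map_cons, Multiset.prod_cons, Multiset.map_cons, Multiset.prod_cons,
      jetEval_linForm_mul]
    set b := (s.map fun h => Fintype.card ι * ‖h‖).prod * g with hb
    have hshift : ∀ i, |h i * jetEval (fun α => J (α + Pi.single i 1)) (s.map linForm).prod|
        ≤ ‖h‖ * b := fun i => by
      rw [abs_mul]
      refine mul_le_mul (PiLp.norm_apply_le h i) (ih fun α hα => hJ _ ?_) (abs_nonneg _)
        (norm_nonneg _)
      simp [sum_add_distrib, hα]
    calc |∑ i, h i * jetEval (fun α => J (α + Pi.single i 1)) (s.map linForm).prod|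
        ≤ ∑ _i : ι, ‖h‖ * b := (abs_sum_le_sum_abs _ _).trans (sum_le_sum fun i _ => hshift i)
      _ = _ := by rw [sum_const, card_univ, nsmul_eq_mul, hb]; ring

lemma abs_jetEval_linForm_pow_mul_le {g : ℝ} {J : (ι → ℕ) → ℝ} {j k : ℕ}
    (hJ : ∀ α, ∑ i, α i = j + k → |J α| ≤ g) (v h : EuclideanSpace ℝ ι) :
    |jetEval J (linForm v ^ j * linForm h ^ k)|
      ≤ (Fintype.card ι * ‖v‖) ^ j * (Fintype.card ι * ‖h‖) ^ k * g := by
  simpa using abs_jetEval_prod_linForm_le (Multiset.replicate j v + Multiset.replicate k h)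
    (by simpa using hJ)

variable [DecidableEq ι]

/-- The family `V` is the jet of a `C^m` function: `V α` is the classical derivative `D^α (V 0)`
for `|α| ≤ m`. Nothing is required of `V α` with `|α| > m`. -/
structure IsClassicalJet (V : (ι → ℕ) → EuclideanSpace ℝ ι → ℝ) (m : ℕ) : Prop where
  differentiable : ∀ α, ∑ i, α i < m → Differentiable ℝ (V α)
  fderiv_single : ∀ α i, ∑ i, α i < m → ∀ w,
    fderiv ℝ (V α) w (EuclideanSpace.single i 1) = V (α + Pi.single i 1) w
  continuous : ∀ α, ∑ i, α i ≤ m → Continuous (V α)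

namespace IsClassicalJet

variable {V : (ι → ℕ) → EuclideanSpace ℝ ι → ℝ} {m : ℕ}

lemma fderiv_apply (hV : IsClassicalJet V m) {α : ι → ℕ} (hα : ∑ i, α i < m)
    (w v : EuclideanSpace ℝ ι) :
    fderiv ℝ (V α) w v = ∑ i, v i * V (α + Pi.single i 1) w := by
  have hv : v = ∑ i, v i • EuclideanSpace.single i (1 : ℝ) := by
    ext j
    simp [Pi.single_apply]
  conv_lhs => rw [hv, map_sum]
  simp only [map_smul, hV.fderiv_single α _ hα, smul_eq_mul]

lemma hasDerivAt_jetEval_line (hV : IsClassicalJet V m) {q : MvPolynomial ι ℝ} {d : ℕ}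
    (hq : q.IsHomogeneous d) (hd : d < m) (z v : EuclideanSpace ℝ ι) (t : ℝ) :
    HasDerivAt (fun t : ℝ => jetEval (V · (z + t • v)) q)
      (jetEval (V · (z + t • v)) (linForm v * q)) t := by
  have hline : HasDerivAt (fun t : ℝ => z + t • v) v t := by
    simpa using ((hasDerivAt_id t).smul_const v).const_add z
  rw [jetEval_linForm_mul]
  simp only [jetEval_eq_sum, mul_sum]
  rw [sum_comm]
  refine HasDerivAt.fun_sum fun α hα => ?_
  have hαm : ∑ i, α i < m := (sum_eq_of_mem_support hq hα).trans_lt hd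
  have hderiv := ((hV.differentiable α hαm _).hasFDerivAt.comp_hasDerivAt t hline).const_mul
    (q.coeff α)
  rw [hV.fderiv_apply hαm, mul_sum] at hderiv
  simp only [mul_left_comm (v _)]
  exact hderiv

lemma continuous_jetEval (hV : IsClassicalJet V m) {q : MvPolynomial ι ℝ} {d : ℕ}
    (hq : q.IsHomogeneous d) (hd : d ≤ m) : Continuous fun w => jetEval (V · w) q := by
  simp only [jetEval_eq_sum]
  exact continuous_finsetSum _ fun α hα =>
    continuous_const.mul (hV.continuous _ ((sum_eq_of_mem_support hq hα).trans_le hd))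

end IsClassicalJet

end Jets

section TwoPointDefect

variable {ι : Type*} [Fintype ι]

/-- The remainder at `x` of the Taylor expansion about `z`, with terms of degree `< K`, of the
function `q(D) u` whose jet is read off from the jet `V` of `u`. -/
noncomputable def taylorRem (V : (ι → ℕ) → EuclideanSpace ℝ ι → ℝ) (q : MvPolynomial ι ℝ) (K : ℕ)
    (z x : EuclideanSpace ℝ ι) : ℝ :=
  jetEval (V · x) q
    - ∑ j ∈ range K, (j.factorial : ℝ)⁻¹ • jetEval (V · z) (linForm (x - z) ^ j * q)

/-- The numerator of the difference quotient of the theorem (with `N = ℓ - 1`), grouped by the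
order `k = |α|` of the derivatives. The terms with `N < k` have coefficient `0`; they are kept so
that the sum matches Taylor expansions of order `2 * N`. -/
noncomputable def twoPointDefect (V : (ι → ℕ) → EuclideanSpace ℝ ι → ℝ) (N : ℕ)
    (x y : EuclideanSpace ℝ ι) : ℝ :=
  ∑ k ∈ range (2 * N + 1), (padeCoeff N k : ℝ) *
    ((-1) ^ k * jetEval (V · y) (linForm (y - x) ^ k) - jetEval (V · x) (linForm (y - x) ^ k))

lemma twoPointDefect_self (V : (ι → ℕ) → EuclideanSpace ℝ ι → ℝ) (N : ℕ)
    (x : EuclideanSpace ℝ ι) : twoPointDefect V N x x = 0 := by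
  refine sum_eq_zero fun k _ => ?_
  rcases k with _ | k <;> simp [linForm_zero]

lemma sum_padeCoeff_mul_jetEval_eq_zero (J : (ι → ℕ) → ℝ) (N : ℕ) (x y z : EuclideanSpace ℝ ι) :
    ∑ k ∈ range (2 * N + 1), (padeCoeff N k : ℝ) *
      ((-1) ^ k * ∑ j ∈ range (2 * N + 1 - k),
          (j.factorial : ℝ)⁻¹ • jetEval J (linForm (y - z) ^ j * linForm (y - x) ^ k)
        - ∑ j ∈ range (2 * N + 1 - k),
          (j.factorial : ℝ)⁻¹ • jetEval J (linForm (x - z) ^ j * linForm (y - x) ^ k)) = 0 := by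
  have hyz : linForm (y - x) + linForm (x - z) = linForm (y - z) := by
    rw [← linForm_add, sub_add_sub_cancel]
  have hpade := congrArg (jetEval J)
    (sum_padeCoeff_smul_eq_zero N (linForm (y - x)) (linForm (x - z)))
  rw [hyz, map_zero, map_sum] at hpade
  rw [← hpade]
  refine sum_congr rfl fun k _ => ?_
  rw [map_sum, mul_sum, ← sum_sub_distrib, mul_sum]
  refine sum_congr rfl fun j _ => ?_
  have hneg : (-linForm (y - x)) ^ k * linForm (y - z) ^ j
      = (-1 : ℝ) ^ k • (linForm (y - z) ^ j * linForm (y - x) ^ k) := by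
    rw [neg_pow, Algebra.smul_def, map_pow, map_neg, map_one]
    ring
  rw [map_rat_smul, map_sub, hneg, map_smul, Rat.smul_def, mul_comm (linForm (y - x) ^ k)]
  push_cast
  simp only [smul_eq_mul]
  ring

lemma twoPointDefect_eq_sum_taylorRem (V : (ι → ℕ) → EuclideanSpace ℝ ι → ℝ) (N : ℕ)
    (x y z : EuclideanSpace ℝ ι) :
    twoPointDefect V N x y = ∑ k ∈ range (2 * N + 1), (padeCoeff N k : ℝ) *
      ((-1) ^ k * taylorRem V (linForm (y - x) ^ k) (2 * N + 1 - k) z y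
        - taylorRem V (linForm (y - x) ^ k) (2 * N + 1 - k) z x) := by
  rw [twoPointDefect, ← sub_eq_zero, ← sum_sub_distrib,
    ← sum_padeCoeff_mul_jetEval_eq_zero (V · z) N x y z]
  refine sum_congr rfl fun k _ => ?_
  rw [taylorRem, taylorRem]
  ring

lemma enorm_twoPointDefect_le_sum_taylorRem (V : (ι → ℕ) → EuclideanSpace ℝ ι → ℝ) (N : ℕ)
    (x y z : EuclideanSpace ℝ ι) :
    ‖twoPointDefect V N x y‖ₑ ≤ ∑ k ∈ range (2 * N + 1), ENNReal.ofReal (padeCoeff N k) *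
      (‖taylorRem V (linForm (y - x) ^ k) (2 * N + 1 - k) z x‖ₑ
        + ‖taylorRem V (linForm (y - x) ^ k) (2 * N + 1 - k) z y‖ₑ) := by
  rw [twoPointDefect_eq_sum_taylorRem V N x y z]
  refine (enorm_sum_le _ _).trans (sum_le_sum fun k _ => ?_)
  rw [enorm_mul, Real.enorm_of_nonneg (by exact_mod_cast padeCoeff_nonneg N k)]
  gcongr
  exact enorm_sub_le.trans (by simp [enorm_mul, enorm_pow, add_comm])

lemma tendsto_twoPointDefect {κ : Type*} {l : Filter κ}
    {V : (ι → ℕ) → EuclideanSpace ℝ ι → ℝ}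
    {W : κ → (ι → ℕ) → EuclideanSpace ℝ ι → ℝ} {N : ℕ} {x y : EuclideanSpace ℝ ι}
    (hx : ∀ α, ∑ i, α i ≤ 2 * N → Filter.Tendsto (W · α x) l (nhds (V α x)))
    (hy : ∀ α, ∑ i, α i ≤ 2 * N → Filter.Tendsto (W · α y) l (nhds (V α y))) :
    Filter.Tendsto (fun i => twoPointDefect (W i) N x y) l (nhds (twoPointDefect V N x y)) := by
  refine tendsto_finsetSum _ fun k hk => ?_
  have hjet : ∀ w, (∀ α, ∑ i, α i ≤ 2 * N → Filter.Tendsto (W · α w) l (nhds (V α w))) →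
      Filter.Tendsto (fun i => jetEval (W i · w) (linForm (y - x) ^ k)) l
        (nhds (jetEval (V · w) (linForm (y - x) ^ k))) := fun w hw => by
    simp only [jetEval_eq_sum]
    refine tendsto_finsetSum _ fun α hα => (hw α ?_).const_mul _
    exact (sum_eq_of_mem_support (isHomogeneous_linForm_pow _ k) hα).trans_le
      (mem_range_succ_iff.1 hk)
  exact (((hjet y hy).const_mul _).sub (hjet x hx)).const_mul _

variable [DecidableEq ι] {V : (ι → ℕ) → EuclideanSpace ℝ ι → ℝ}

namespace IsClassicalJet

lemma enorm_taylorRem_le {m d K : ℕ} (hV : IsClassicalJet V m) {q : MvPolynomial ι ℝ}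
    (hq : q.IsHomogeneous d) (hK : K + 1 + d = m) (z x : EuclideanSpace ℝ ι) :
    ‖taylorRem V q (K + 1) z x‖ₑ ≤ ∫⁻ t in Ioo (0 : ℝ) 1,
      ‖jetEval (V · (z + t • (x - z))) (linForm (x - z) ^ (K + 1) * q)‖ₑ := by
  have hhom := fun j => isHomogeneous_linForm_pow_mul (x - z) j hq
  have hderiv : ∀ k ≤ K, ∀ t : ℝ,
      HasDerivAt (fun t : ℝ => jetEval (V · (z + t • (x - z))) (linForm (x - z) ^ k * q))
        (jetEval (V · (z + t • (x - z))) (linForm (x - z) ^ (k + 1) * q)) t := fun k hk t => by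
    rw [pow_succ', mul_assoc]
    exact hV.hasDerivAt_jetEval_line (hhom k) (by omega) z (x - z) t
  have hcont := (hV.continuous_jetEval (hhom (K + 1)) hK.le).comp
    (g := fun w => jetEval (V · w) (linForm (x - z) ^ (K + 1) * q))
    (f := fun t : ℝ => z + t • (x - z)) (by fun_prop)
  simpa [taylorRem] using enorm_sub_taylor_sum_le
    (F := fun k t => jetEval (V · (z + t • (x - z))) (linForm (x - z) ^ k * q)) hderiv hcont

variable {m : ℕ} {g : EuclideanSpace ℝ ι → ℝ}

lemma enorm_taylorRem_linForm_pow_le (hV : IsClassicalJet V m)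
    (hg : ∀ w α, ∑ i, α i = m → |V α w| ≤ g w) {x z h : EuclideanSpace ℝ ι} {ρ : ℝ}
    (hx : ‖x - z‖ ≤ ρ) (hh : ‖h‖ ≤ ρ) {k : ℕ} (hk : k < m) :
    ‖taylorRem V (linForm h ^ k) (m - k) z x‖ₑ
      ≤ ENNReal.ofReal ((Fintype.card ι * ρ) ^ m) *
        ∫⁻ t in Ioo (0 : ℝ) 1, ‖g (z + t • (x - z))‖ₑ := by
  obtain ⟨K, rfl⟩ := Nat.exists_eq_add_of_lt hk
  rw [show k + K + 1 - k = K + 1 by omega, ← lintegral_const_mul' _ _ ENNReal.ofReal_ne_top]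
  refine (hV.enorm_taylorRem_le (isHomogeneous_linForm_pow h k) (by omega) z x).trans
    (lintegral_mono fun t => ?_)
  have hρ : 0 ≤ ρ := (norm_nonneg h).trans hh
  rw [← Real.enorm_of_nonneg (r := (Fintype.card ι * ρ) ^ (k + K + 1)) (by positivity),
    ← enorm_mul, enorm_le_iff_norm_le, norm_mul, norm_pow,
    Real.norm_of_nonneg (r := Fintype.card ι * ρ) (by positivity), Real.norm_eq_abs]
  calc |jetEval (V · (z + t • (x - z))) (linForm (x - z) ^ (K + 1) * linForm h ^ k)|
      ≤ (Fintype.card ι * ‖x - z‖) ^ (K + 1) * (Fintype.card ι * ‖h‖) ^ k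
          * g (z + t • (x - z)) :=
        abs_jetEval_linForm_pow_mul_le (fun α hα => hg _ α (by omega)) _ _
    _ ≤ (Fintype.card ι * ‖x - z‖) ^ (K + 1) * (Fintype.card ι * ‖h‖) ^ k
          * ‖g (z + t • (x - z))‖ :=
        mul_le_mul_of_nonneg_left (Real.le_norm_self _) (by positivity)
    _ ≤ (Fintype.card ι * ρ) ^ (K + 1) * (Fintype.card ι * ρ) ^ k * ‖g (z + t • (x - z))‖ := by
        gcongr
    _ = (Fintype.card ι * ρ) ^ (k + K + 1) * ‖g (z + t • (x - z))‖ := by ring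

lemma enorm_twoPointDefect_le {N : ℕ} (hV : IsClassicalJet V (2 * N + 1))
    (hg : ∀ w α, ∑ i, α i = 2 * N + 1 → |V α w| ≤ g w) {x y z : EuclideanSpace ℝ ι} {ρ : ℝ}
    (hx : ‖x - z‖ ≤ ρ) (hy : ‖y - z‖ ≤ ρ) (hxy : ‖y - x‖ ≤ ρ) :
    ‖twoPointDefect V N x y‖ₑ
      ≤ ENNReal.ofReal ((∑ k ∈ range (2 * N + 1), (padeCoeff N k : ℝ)) *
          (Fintype.card ι * ρ) ^ (2 * N + 1)) *
        ((∫⁻ t in Ioo (0 : ℝ) 1, ‖g (z + t • (x - z))‖ₑ)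
          + ∫⁻ t in Ioo (0 : ℝ) 1, ‖g (z + t • (y - z))‖ₑ) := by
  have hpade : ∀ k, (0 : ℝ) ≤ padeCoeff N k := fun k => by exact_mod_cast padeCoeff_nonneg N k
  rw [ENNReal.ofReal_mul (sum_nonneg fun k _ => hpade k),
    ENNReal.ofReal_sum_of_nonneg fun k _ => hpade k, mul_assoc, sum_mul, mul_add]
  refine (enorm_twoPointDefect_le_sum_taylorRem V N x y z).trans (sum_le_sum fun k hk => ?_)
  gcongr
  · exact hV.enorm_taylorRem_linForm_pow_le hg hx hxy (mem_range.1 hk)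
  · exact hV.enorm_taylorRem_linForm_pow_le hg hy hxy (mem_range.1 hk)

end IsClassicalJet

end TwoPointDefect

section MaximalFunction

lemma setLIntegral_ball_comp_smul_add {E : Type*} [NormedAddCommGroup E] [NormedSpace ℝ E]
    [FiniteDimensional ℝ E] [MeasurableSpace E] [BorelSpace E] (μ : Measure E)
    [μ.IsAddHaarMeasure] (f : E → ℝ≥0∞) {s : ℝ} (hs : 0 < s) (c v : E) (R : ℝ) :
    ENNReal.ofReal (s ^ Module.finrank ℝ E) * ∫⁻ z in Metric.ball c R, f (s • z + v) ∂μ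
      = ∫⁻ w in Metric.ball (s • c + v) (s * R), f w ∂μ := by
  let e : E ≃ₜ E := (Homeomorph.smulOfNeZero s hs.ne').trans (Homeomorph.addRight v)
  have hmap : μ.map e = ENNReal.ofReal (s ^ Module.finrank ℝ E)⁻¹ • μ := by
    have hcomp : ⇑e = (· + v) ∘ (s • ·) := rfl
    rw [hcomp, ← Measure.map_map (measurable_add_const v) (measurable_const_smul s),
      Measure.map_addHaar_smul μ hs.ne', Measure.map_smul, map_add_right_eq_self,
      abs_of_pos (by positivity)]
  have hball : Metric.ball c R = e ⁻¹' Metric.ball (s • c + v) (s * R) := by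
    ext z
    change dist z c < R ↔ dist (s • z + v) (s • c + v) < s * R
    rw [dist_add_right, dist_smul₀, Real.norm_of_nonneg hs.le, mul_lt_mul_iff_right₀ hs]
  have hchange : ∫⁻ z in Metric.ball c R, f (s • z + v) ∂μ
      = ∫⁻ w in Metric.ball (s • c + v) (s * R), f w ∂μ.map e := by
    rw [hball, e.measurableEmbedding.restrict_map, e.measurableEmbedding.lintegral_map]
    rfl
  have hpos : 0 < s ^ Module.finrank ℝ E := by positivity
  rw [hchange, hmap, Measure.restrict_smul, lintegral_smul_measure, smul_eq_mul, ← mul_assoc,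
    ← ENNReal.ofReal_mul hpos.le, mul_inv_cancel₀ hpos.ne', ENNReal.ofReal_one, one_mul]

variable {n : ℕ} {f g : EuclideanSpace ℝ (Fin n) → ℝ} {c x : EuclideanSpace ℝ (Fin n)} {r : ℝ}

lemma volume_ball_ne_zero_of_mem (hx : x ∈ Metric.ball c r) : volume (Metric.ball c r) ≠ 0 :=
  (Metric.measure_ball_pos volume c (Metric.pos_of_mem_ball hx)).ne'

lemma setLIntegral_ball_le_volume_mul_maxFn (f : EuclideanSpace ℝ (Fin n) → ℝ)
    (hx : x ∈ Metric.ball c r) :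
    ∫⁻ y in Metric.ball c r, ‖f y‖ₑ ≤ volume (Metric.ball c r) * maxFn f x := by
  rw [← ENNReal.inv_mul_le_iff (volume_ball_ne_zero_of_mem hx) measure_ball_lt_top.ne]
  exact le_iSup_of_le c (le_iSup_of_le r (le_iSup_of_le hx le_rfl))

lemma maxFn_le {D : ℝ≥0∞} (h : ∀ c r, x ∈ Metric.ball c r →
      ∫⁻ y in Metric.ball c r, ‖f y‖ₑ ≤ volume (Metric.ball c r) * D) : maxFn f x ≤ D := by
  refine iSup_le fun c => iSup_le fun r => iSup_le fun hx => ?_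
  rw [ENNReal.inv_mul_le_iff (volume_ball_ne_zero_of_mem hx) measure_ball_lt_top.ne]
  exact h c r hx

lemma maxFn_mono (h : ∀ z, ‖f z‖ₑ ≤ ‖g z‖ₑ) (x : EuclideanSpace ℝ (Fin n)) :
    maxFn f x ≤ maxFn g x :=
  maxFn_le fun _ _ hx => (lintegral_mono h).trans (setLIntegral_ball_le_volume_mul_maxFn g hx)

lemma maxFn_sum_abs_le {κ : Type*} (s : Finset κ) (f : κ → EuclideanSpace ℝ (Fin n) → ℝ)
    (hf : ∀ i ∈ s, AEMeasurable (f i)) (x : EuclideanSpace ℝ (Fin n)) :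
    maxFn (fun z => ∑ i ∈ s, |f i z|) x ≤ ∑ i ∈ s, maxFn (f i) x := by
  refine maxFn_le fun c r hx => ?_
  calc ∫⁻ z in Metric.ball c r, ‖∑ i ∈ s, |f i z|‖ₑ
      ≤ ∫⁻ z in Metric.ball c r, ∑ i ∈ s, ‖f i z‖ₑ := lintegral_mono fun z =>
        (enorm_sum_le _ _).trans_eq (sum_congr rfl fun i _ => Real.enorm_abs _)
    _ = ∑ i ∈ s, ∫⁻ z in Metric.ball c r, ‖f i z‖ₑ :=
        lintegral_finsetSum' _ fun i hi => (hf i hi).enorm.restrict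
    _ ≤ ∑ i ∈ s, volume (Metric.ball c r) * maxFn (f i) x :=
        sum_le_sum fun i _ => setLIntegral_ball_le_volume_mul_maxFn _ hx
    _ = volume (Metric.ball c r) * ∑ i ∈ s, maxFn (f i) x := (mul_sum ..).symm

lemma setLIntegral_ball_segment_le (g : EuclideanSpace ℝ (Fin n) → ℝ)
    (hx : x ∈ Metric.ball c r) {t : ℝ} (ht : t < 1) :
    ∫⁻ z in Metric.ball c r, ‖g (z + t • (x - z))‖ₑ ≤ volume (Metric.ball c r) * maxFn g x := by
  have hs : 0 < 1 - t := sub_pos.2 ht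
  have hcontract : ∀ z, z + t • (x - z) = (1 - t) • z + t • x := fun z => by module
  have hxball : x ∈ Metric.ball ((1 - t) • c + t • x) ((1 - t) * r) := by
    have hdist : dist ((1 - t) • x + t • x) ((1 - t) • c + t • x) = (1 - t) * dist x c := by
      rw [dist_add_right, dist_smul₀, Real.norm_of_nonneg hs.le]
    rw [← add_smul, sub_add_cancel, one_smul] at hdist
    rw [Metric.mem_ball, hdist]
    exact mul_lt_mul_of_pos_left hx hs
  have hscale : ENNReal.ofReal ((1 - t) ^ Module.finrank ℝ (EuclideanSpace ℝ (Fin n))) ≠ 0 := by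
    simpa using pow_pos hs _
  rw [← ENNReal.mul_le_mul_iff_right hscale ENNReal.ofReal_ne_top]
  simp only [hcontract]
  rw [setLIntegral_ball_comp_smul_add volume (fun w => ‖g w‖ₑ) hs, ← mul_assoc,
    Measure.addHaar_ball_center volume c, ← Measure.addHaar_ball_mul_of_pos volume _ hs]
  exact setLIntegral_ball_le_volume_mul_maxFn g hxball

lemma measurable_uncurry_segment (hg : Measurable g) (x : EuclideanSpace ℝ (Fin n)) :
    Measurable fun p : EuclideanSpace ℝ (Fin n) × ℝ => ‖g (p.1 + p.2 • (x - p.1))‖ₑ := by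
  fun_prop

lemma setLIntegral_ball_lintegral_segment_le (hg : Measurable g) (hx : x ∈ Metric.ball c r) :
    ∫⁻ z in Metric.ball c r, ∫⁻ t in Ioo (0 : ℝ) 1, ‖g (z + t • (x - z))‖ₑ
      ≤ volume (Metric.ball c r) * maxFn g x := by
  rw [lintegral_lintegral_swap (measurable_uncurry_segment hg x).aemeasurable]
  calc _ ≤ ∫⁻ _ in Ioo (0 : ℝ) 1, volume (Metric.ball c r) * maxFn g x :=
        setLIntegral_mono' measurableSet_Ioo fun t ht => setLIntegral_ball_segment_le g hx ht.2
    _ = _ := by simp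

/-- The constant of the pointwise estimate for smooth functions; `3 = 2 + 1` comes from the
triangle inequality in `Metric.ball x (2 * ‖y - x‖)`. -/
noncomputable def defectConst (n N : ℕ) : ℝ :=
  (∑ k ∈ range (2 * N + 1), (padeCoeff N k : ℝ)) * (n * 3) ^ (2 * N + 1)

lemma defectConst_nonneg (n N : ℕ) : 0 ≤ defectConst n N :=
  mul_nonneg (sum_nonneg fun k _ => by exact_mod_cast padeCoeff_nonneg N k) (by positivity)

variable {V : (Fin n → ℕ) → EuclideanSpace ℝ (Fin n) → ℝ} {N : ℕ}

namespace IsClassicalJet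

lemma enorm_twoPointDefect_le_of_mem_ball (hV : IsClassicalJet V (2 * N + 1))
    (hg : ∀ w α, ∑ i, α i = 2 * N + 1 → |V α w| ≤ g w) {x y z : EuclideanSpace ℝ (Fin n)}
    (hz : z ∈ Metric.ball x (2 * ‖y - x‖)) :
    ‖twoPointDefect V N x y‖ₑ ≤ ENNReal.ofReal (defectConst n N * ‖y - x‖ ^ (2 * N + 1)) *
      ((∫⁻ t in Ioo (0 : ℝ) 1, ‖g (z + t • (x - z))‖ₑ)
        + ∫⁻ t in Ioo (0 : ℝ) 1, ‖g (z + t • (y - z))‖ₑ) := by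
  have hxz : ‖x - z‖ < 2 * ‖y - x‖ := by rwa [Metric.mem_ball', dist_eq_norm] at hz
  have hyz : ‖y - z‖ ≤ ‖y - x‖ + ‖x - z‖ := by simpa using norm_add_le (y - x) (x - z)
  have hdefect := hV.enorm_twoPointDefect_le hg (x := x) (y := y) (z := z) (ρ := 3 * ‖y - x‖)
    (by linarith [norm_nonneg (y - x)]) (by linarith) (by linarith [norm_nonneg (y - x)])
  rwa [Fintype.card_fin, ← mul_assoc, mul_pow, ← mul_assoc] at hdefect

lemma enorm_twoPointDefect_le_maxFn (hV : IsClassicalJet V (2 * N + 1)) (hgm : Measurable g)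
    (hg : ∀ w α, ∑ i, α i = 2 * N + 1 → |V α w| ≤ g w) (x y : EuclideanSpace ℝ (Fin n)) :
    ‖twoPointDefect V N x y‖ₑ ≤ ENNReal.ofReal (defectConst n N * ‖y - x‖ ^ (2 * N + 1)) *
      (maxFn g x + maxFn g y) := by
  rcases eq_or_ne x y with rfl | hxy
  · simp [twoPointDefect_self]
  have hr : 0 < ‖y - x‖ := norm_pos_iff.2 (sub_ne_zero.2 hxy.symm)
  set B := Metric.ball x (2 * ‖y - x‖)
  set A := ENNReal.ofReal (defectConst n N * ‖y - x‖ ^ (2 * N + 1))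
  have hxB : x ∈ B := Metric.mem_ball_self (by positivity)
  have hyB : y ∈ B := by
    rw [Metric.mem_ball, dist_eq_norm]
    linarith
  rw [← ENNReal.mul_le_mul_iff_right (volume_ball_ne_zero_of_mem hxB) measure_ball_lt_top.ne]
  calc volume B * ‖twoPointDefect V N x y‖ₑ
      = ∫⁻ _ in B, ‖twoPointDefect V N x y‖ₑ := by rw [setLIntegral_const, mul_comm]
    _ ≤ ∫⁻ z in B, A * ((∫⁻ t in Ioo (0 : ℝ) 1, ‖g (z + t • (x - z))‖ₑ)
          + ∫⁻ t in Ioo (0 : ℝ) 1, ‖g (z + t • (y - z))‖ₑ) :=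
        setLIntegral_mono' measurableSet_ball fun z hz =>
          hV.enorm_twoPointDefect_le_of_mem_ball hg hz
    _ = A * ((∫⁻ z in B, ∫⁻ t in Ioo (0 : ℝ) 1, ‖g (z + t • (x - z))‖ₑ)
          + ∫⁻ z in B, ∫⁻ t in Ioo (0 : ℝ) 1, ‖g (z + t • (y - z))‖ₑ) := by
        rw [lintegral_const_mul' _ _ ENNReal.ofReal_ne_top, lintegral_add_left
          (measurable_uncurry_segment hgm x).lintegral_prod_right']
    _ ≤ A * (volume B * maxFn g x + volume B * maxFn g y) := by
        gcongr
        · exact setLIntegral_ball_lintegral_segment_le hgm hxB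
        · exact setLIntegral_ball_lintegral_segment_le hgm hyB
    _ = volume B * (A * (maxFn g x + maxFn g y)) := by ring

end IsClassicalJet

end MaximalFunction

section Mollification

lemma setLIntegral_ball_comp_sub_le {G : Type*} [SeminormedAddCommGroup G] [MeasurableSpace G]
    [BorelSpace G] (μ : Measure G) [μ.IsAddRightInvariant] (f : G → ℝ≥0∞) {δ : ℝ} {s : G}
    (hs : ‖s‖ ≤ δ) (c : G) (r : ℝ) :
    ∫⁻ z in Metric.ball c r, f (z - s) ∂μ ≤ ∫⁻ y in Metric.ball c (r + δ), f y ∂μ := by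
  have hball : Metric.ball c r = (· - s) ⁻¹' Metric.ball (c - s) r := by
    ext z
    simp
  calc ∫⁻ z in Metric.ball c r, f (z - s) ∂μ
      = ∫⁻ y in Metric.ball (c - s) r, f y ∂μ := by
        rw [hball]
        exact (measurePreserving_sub_right μ s).setLIntegral_comp_preimage_emb
          (measurableEmbedding_subRight s) f _
    _ ≤ ∫⁻ y in Metric.ball c (r + δ), f y ∂μ :=
        lintegral_mono_set (Metric.ball_subset_ball' (by simpa using hs))

variable {E : Type*} [NormedAddCommGroup E] [NormedSpace ℝ E] [HasContDiffBump E]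
  [MeasurableSpace E]
  {F : Type*} [NormedAddCommGroup F] [NormedSpace ℝ F]

/-- The mollification of `f` by the bump function `φ`, normalized to have integral one. -/
noncomputable def mollify (μ : Measure E) (φ : ContDiffBump (0 : E)) (f : E → F) : E → F :=
  convolution (φ.normed μ) f (ContinuousLinearMap.lsmul ℝ ℝ) μ

lemma enorm_mollify_le_lintegral (μ : Measure E) (φ : ContDiffBump (0 : E)) (f : E → F) (z : E) :
    ‖mollify μ φ f z‖ₑ ≤ ∫⁻ s, ‖φ.normed μ s‖ₑ * ‖f (z - s)‖ₑ ∂μ := by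
  simp only [← enorm_smul]
  exact enorm_integral_le_lintegral_enorm _

variable [BorelSpace E] [FiniteDimensional ℝ E] (μ : Measure E) [μ.IsAddHaarMeasure]
  (φ : ContDiffBump (0 : E))

lemma lintegral_enorm_normed : ∫⁻ s, ‖φ.normed μ s‖ₑ ∂μ = 1 := by
  simp only [Real.enorm_of_nonneg (φ.nonneg_normed _)]
  rw [← ofReal_integral_eq_lintegral_ofReal φ.integrable_normed
    (Filter.Eventually.of_forall φ.nonneg_normed), φ.integral_normed, ENNReal.ofReal_one]

lemma normed_eq_zero_of_notMem_ball {s : E} (hs : s ∉ Metric.ball 0 φ.rOut) :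
    φ.normed μ s = 0 := by
  rwa [← φ.support_normed_eq (μ := μ), Function.notMem_support] at hs

lemma enorm_normed_le_inv_measure_ball (s : E) :
    ‖φ.normed μ s‖ₑ ≤ (μ (Metric.ball 0 φ.rIn))⁻¹ := by
  have hpos : 0 < μ.real (Metric.closedBall (0 : E) φ.rIn) :=
    ENNReal.toReal_pos (Metric.measure_closedBall_pos μ 0 φ.rIn_pos).ne'
      measure_closedBall_lt_top.ne
  calc ‖φ.normed μ s‖ₑ ≤ ENNReal.ofReal (1 / μ.real (Metric.closedBall 0 φ.rIn)) := by
        rw [Real.enorm_of_nonneg (φ.nonneg_normed s)]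
        exact ENNReal.ofReal_le_ofReal (φ.normed_le_div_measure_closedBall_rIn μ s)
    _ = (μ (Metric.closedBall 0 φ.rIn))⁻¹ := by
        rw [one_div, ENNReal.ofReal_inv_of_pos hpos,
          ofReal_measureReal measure_closedBall_lt_top.ne]
    _ ≤ (μ (Metric.ball 0 φ.rIn))⁻¹ :=
        ENNReal.inv_le_inv.2 (measure_mono Metric.ball_subset_closedBall)

variable {μ φ} {f : E → F}

lemma enorm_mollify_le_setLIntegral_ball (z : E) :
    ‖mollify μ φ f z‖ₑ
      ≤ (μ (Metric.ball 0 φ.rIn))⁻¹ * ∫⁻ y in Metric.ball z φ.rOut, ‖f y‖ₑ ∂μ := by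
  have hball : Metric.ball 0 φ.rOut = (z - ·) ⁻¹' Metric.ball z φ.rOut := by
    ext s
    simp [dist_eq_norm]
  have htranslate : ∫⁻ s in Metric.ball 0 φ.rOut, ‖f (z - s)‖ₑ ∂μ
      = ∫⁻ y in Metric.ball z φ.rOut, ‖f y‖ₑ ∂μ := by
    rw [hball]
    exact (Measure.measurePreserving_sub_left μ z).setLIntegral_comp_preimage_emb
      (measurableEmbedding_subLeft z) (‖f ·‖ₑ) _
  have hsupport : (fun s => ‖φ.normed μ s‖ₑ * ‖f (z - s)‖ₑ).support ⊆ Metric.ball 0 φ.rOut := by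
    refine Function.support_subset_iff'.2 fun s hs => ?_
    rw [normed_eq_zero_of_notMem_ball μ φ hs, enorm_zero, zero_mul]
  calc ‖mollify μ φ f z‖ₑ ≤ ∫⁻ s, ‖φ.normed μ s‖ₑ * ‖f (z - s)‖ₑ ∂μ :=
        enorm_mollify_le_lintegral μ φ f z
    _ = ∫⁻ s in Metric.ball 0 φ.rOut, ‖φ.normed μ s‖ₑ * ‖f (z - s)‖ₑ ∂μ :=
        (setLIntegral_eq_of_support_subset hsupport).symm
    _ ≤ ∫⁻ s in Metric.ball 0 φ.rOut, (μ (Metric.ball 0 φ.rIn))⁻¹ * ‖f (z - s)‖ₑ ∂μ := by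
        gcongr with s
        exact enorm_normed_le_inv_measure_ball μ φ s
    _ = (μ (Metric.ball 0 φ.rIn))⁻¹ * ∫⁻ y in Metric.ball z φ.rOut, ‖f y‖ₑ ∂μ := by
        rw [lintegral_const_mul' _ _
          (ENNReal.inv_ne_top.2 (Metric.measure_ball_pos μ _ φ.rIn_pos).ne'), htranslate]

lemma setLIntegral_ball_enorm_mollify_le (hf : AEStronglyMeasurable f μ) (c : E) (r : ℝ) :
    ∫⁻ z in Metric.ball c r, ‖mollify μ φ f z‖ₑ ∂μ
      ≤ ∫⁻ y in Metric.ball c (r + φ.rOut), ‖f y‖ₑ ∂μ := by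
  have hmeas : AEMeasurable (Function.uncurry fun z s : E => ‖φ.normed μ s‖ₑ * ‖f (z - s)‖ₑ)
      ((μ.restrict (Metric.ball c r)).prod μ) := by
    simp only [← enorm_smul]
    exact ((φ.continuous_normed (μ := μ)).aestronglyMeasurable.convolution_integrand
      (ContinuousLinearMap.lsmul ℝ ℝ) hf).enorm.mono_ac
      (Measure.absolutelyContinuous_restrict.prod Measure.AbsolutelyContinuous.rfl)
  have hshift : ∀ s, ‖φ.normed μ s‖ₑ * ∫⁻ z in Metric.ball c r, ‖f (z - s)‖ₑ ∂μ
      ≤ ‖φ.normed μ s‖ₑ * ∫⁻ y in Metric.ball c (r + φ.rOut), ‖f y‖ₑ ∂μ := fun s => by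
    by_cases hs : s ∈ Metric.ball 0 φ.rOut
    · exact mul_le_mul_right
        (setLIntegral_ball_comp_sub_le μ (‖f ·‖ₑ) (mem_ball_zero_iff.1 hs).le c r) _
    · simp [normed_eq_zero_of_notMem_ball μ φ hs]
  calc ∫⁻ z in Metric.ball c r, ‖mollify μ φ f z‖ₑ ∂μ
      ≤ ∫⁻ z in Metric.ball c r, ∫⁻ s, ‖φ.normed μ s‖ₑ * ‖f (z - s)‖ₑ ∂μ ∂μ :=
        lintegral_mono fun z => enorm_mollify_le_lintegral μ φ f z
    _ = ∫⁻ s, ‖φ.normed μ s‖ₑ * ∫⁻ z in Metric.ball c r, ‖f (z - s)‖ₑ ∂μ ∂μ := by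
        rw [lintegral_lintegral_swap hmeas]
        exact lintegral_congr fun s => lintegral_const_mul' _ _ enorm_ne_top
    _ ≤ ∫⁻ s, ‖φ.normed μ s‖ₑ * ∫⁻ y in Metric.ball c (r + φ.rOut), ‖f y‖ₑ ∂μ ∂μ :=
        lintegral_mono hshift
    _ = ∫⁻ y in Metric.ball c (r + φ.rOut), ‖f y‖ₑ ∂μ := by
        rw [lintegral_mul_const _ φ.continuous_normed.enorm.measurable, lintegral_enorm_normed,
          one_mul]

end Mollification

section MollifiedJets

variable {n : ℕ} {φ : ContDiffBump (0 : EuclideanSpace ℝ (Fin n))}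

lemma volume_ball_mul (c d : EuclideanSpace ℝ (Fin n)) {a : ℝ} (ha : 0 < a) (r : ℝ) :
    volume (Metric.ball c (a * r)) = ENNReal.ofReal (a ^ n) * volume (Metric.ball d r) := by
  rw [Measure.addHaar_ball_mul_of_pos volume c ha r, Measure.addHaar_ball_center volume d r,
    finrank_euclideanSpace_fin]

variable {f : EuclideanSpace ℝ (Fin n) → ℝ} {K : ℝ}

lemma setLIntegral_ball_enorm_mollify_le_of_rOut_le (hK : 1 ≤ K)
    (hf : AEStronglyMeasurable f volume) {c x : EuclideanSpace ℝ (Fin n)} {r : ℝ}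
    (hx : x ∈ Metric.ball c r) (hr : φ.rOut ≤ r) :
    ∫⁻ z in Metric.ball c r, ‖mollify volume φ f z‖ₑ
      ≤ volume (Metric.ball c r) * (ENNReal.ofReal ((2 * K) ^ n) * maxFn f x) := by
  have hr0 : 0 < r := Metric.pos_of_mem_ball hx
  calc ∫⁻ z in Metric.ball c r, ‖mollify volume φ f z‖ₑ
      ≤ ∫⁻ y in Metric.ball c (r + φ.rOut), ‖f y‖ₑ := setLIntegral_ball_enorm_mollify_le hf c r
    _ ≤ ∫⁻ y in Metric.ball c (2 * K * r), ‖f y‖ₑ :=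
        lintegral_mono_set (Metric.ball_subset_ball (by nlinarith))
    _ ≤ volume (Metric.ball c (2 * K * r)) * maxFn f x :=
        setLIntegral_ball_le_volume_mul_maxFn f (Metric.ball_subset_ball (by nlinarith) hx)
    _ = volume (Metric.ball c r) * (ENNReal.ofReal ((2 * K) ^ n) * maxFn f x) := by
        rw [volume_ball_mul c c (by positivity)]
        ring

lemma enorm_mollify_le_maxFn (hφ : φ.rOut ≤ K * φ.rIn) {x z : EuclideanSpace ℝ (Fin n)}
    (hxz : dist x z < 2 * φ.rOut) :
    ‖mollify volume φ f z‖ₑ ≤ ENNReal.ofReal ((2 * K) ^ n) * maxFn f x := by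
  have hK : 0 < K := pos_of_mul_pos_left (φ.rOut_pos.trans_le hφ) φ.rIn_pos.le
  have hvol : volume (Metric.ball (0 : EuclideanSpace ℝ (Fin n)) φ.rIn) ≠ 0 :=
    (Metric.measure_ball_pos volume _ φ.rIn_pos).ne'
  calc ‖mollify volume φ f z‖ₑ
      ≤ (volume (Metric.ball (0 : EuclideanSpace ℝ (Fin n)) φ.rIn))⁻¹ *
          ∫⁻ y in Metric.ball z φ.rOut, ‖f y‖ₑ := enorm_mollify_le_setLIntegral_ball z
    _ ≤ (volume (Metric.ball (0 : EuclideanSpace ℝ (Fin n)) φ.rIn))⁻¹ *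
          ∫⁻ y in Metric.ball z (2 * K * φ.rIn), ‖f y‖ₑ := by
        gcongr
        linarith [φ.rOut_pos]
    _ ≤ (volume (Metric.ball (0 : EuclideanSpace ℝ (Fin n)) φ.rIn))⁻¹ *
          (volume (Metric.ball z (2 * K * φ.rIn)) * maxFn f x) := by
        gcongr
        exact setLIntegral_ball_le_volume_mul_maxFn f (Metric.mem_ball.2 (by linarith))
    _ = ENNReal.ofReal ((2 * K) ^ n) * maxFn f x := by
        rw [volume_ball_mul z 0 (by positivity), mul_comm (ENNReal.ofReal _), mul_assoc,
          ENNReal.inv_mul_cancel_left hvol measure_ball_lt_top.ne]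

lemma maxFn_mollify_le (hφ : φ.rOut ≤ K * φ.rIn) (hf : AEStronglyMeasurable f volume)
    (x : EuclideanSpace ℝ (Fin n)) :
    maxFn (mollify volume φ f) x ≤ ENNReal.ofReal ((2 * K) ^ n) * maxFn f x := by
  have hK : 1 ≤ K := by
    by_contra! hK
    nlinarith [φ.rIn_pos, φ.rIn_lt_rOut]
  refine maxFn_le fun c r hx => ?_
  rcases le_or_gt φ.rOut r with hr | hr
  · exact setLIntegral_ball_enorm_mollify_le_of_rOut_le hK hf hx hr
  calc ∫⁻ z in Metric.ball c r, ‖mollify volume φ f z‖ₑ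
      ≤ ∫⁻ _ in Metric.ball c r, ENNReal.ofReal ((2 * K) ^ n) * maxFn f x :=
        setLIntegral_mono' measurableSet_ball fun z hz => enorm_mollify_le_maxFn hφ
          ((dist_triangle_right x z c).trans_lt
            (by linarith [Metric.mem_ball.1 hx, Metric.mem_ball.1 hz]))
    _ = volume (Metric.ball c r) * (ENNReal.ofReal ((2 * K) ^ n) * maxFn f x) := by
        rw [setLIntegral_const, mul_comm]

lemma fderiv_normed_const_sub (w t v : EuclideanSpace ℝ (Fin n)) :
    fderiv ℝ (fun t => φ.normed volume (w - t)) t v = -fderiv ℝ (φ.normed volume) (w - t) v := by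
  have hφ : Differentiable ℝ (φ.normed (volume : Measure (EuclideanSpace ℝ (Fin n)))) :=
    (φ.contDiff_normed (n := 1)).differentiable one_ne_zero
  have hcomp := ((hφ (w - t)).hasFDerivAt.comp t ((hasFDerivAt_id t).const_sub w)).fderiv
  rw [Function.comp_def] at hcomp
  simp [hcomp]

lemma continuous_mollify (hf : LocallyIntegrable f volume) : Continuous (mollify volume φ f) :=
  φ.hasCompactSupport_normed.continuous_convolution_left _ φ.continuous_normed hf

lemma hasFDerivAt_mollify (hf : LocallyIntegrable f volume) (w : EuclideanSpace ℝ (Fin n)) :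
    HasFDerivAt (mollify volume φ f) (convolution (fderiv ℝ (φ.normed volume)) f
      ((ContinuousLinearMap.lsmul ℝ ℝ).precompL (EuclideanSpace ℝ (Fin n))) volume w) w :=
  φ.hasCompactSupport_normed.hasFDerivAt_convolution_left _ φ.contDiff_normed hf w

lemma fderiv_mollify_apply (hf : LocallyIntegrable f volume) (w v : EuclideanSpace ℝ (Fin n)) :
    fderiv ℝ (mollify volume φ f) w v
      = ∫ t, fderiv ℝ (φ.normed volume) (w - t) v * f t := by
  have hexists := ((φ.hasCompactSupport_normed (μ := volume)).fderiv ℝ).convolutionExists_left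
    ((ContinuousLinearMap.lsmul ℝ ℝ).precompL (EuclideanSpace ℝ (Fin n)))
    ((φ.contDiff_normed (n := 1)).continuous_fderiv one_ne_zero) hf w
  rw [(hasFDerivAt_mollify hf w).fderiv, convolution_def,
    ContinuousLinearMap.integral_apply hexists, ← integral_sub_left_eq_self _ volume w]
  simp

lemma IsWeakDeriv.fderiv_mollify_single {i : Fin n} {u v : EuclideanSpace ℝ (Fin n) → ℝ}
    (huv : IsWeakDeriv i u v) (hu : LocallyIntegrable u volume) (w : EuclideanSpace ℝ (Fin n)) :
    fderiv ℝ (mollify volume φ u) w (EuclideanSpace.single i 1) = mollify volume φ v w := by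
  have hweak := huv (fun t => φ.normed volume (w - t))
    (φ.contDiff_normed.comp (contDiff_const.sub contDiff_id))
    (φ.hasCompactSupport_normed.comp_homeomorph (Homeomorph.subLeft w))
  simp only [fderiv_normed_const_sub, mul_neg, integral_neg, neg_inj] at hweak
  rw [fderiv_mollify_apply hu, mollify, convolution_lsmul_swap]
  simpa only [mul_comm, smul_eq_mul] using hweak

variable {U : (Fin n → ℕ) → EuclideanSpace ℝ (Fin n) → ℝ}

lemma isClassicalJet_mollify (φ : ContDiffBump (0 : EuclideanSpace ℝ (Fin n))) {m : ℕ}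
    (hU : ∀ α, ∑ i, α i ≤ m → LocallyIntegrable (U α) volume)
    (hW : ∀ α i, ∑ j, α j < m → IsWeakDeriv i (U α) (U (α + Pi.single i 1))) :
    IsClassicalJet (fun α => mollify volume φ (U α)) m where
  differentiable α hα w := (hasFDerivAt_mollify (hU α hα.le) w).differentiableAt
  fderiv_single α i hα := (hW α i hα).fderiv_mollify_single (hU α hα.le)
  continuous α hα := continuous_mollify (hU α hα)

/-- A sequence of bump functions shrinking to the origin with a fixed ratio of radii, so that
mollifications converge almost everywhere and their maximal functions are uniformly controlled. -/
noncomputable def shrinkingBump (n i : ℕ) : ContDiffBump (0 : EuclideanSpace ℝ (Fin n)) where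
  rIn := 1 / ((i : ℝ) + 1)
  rOut := 2 * (1 / ((i : ℝ) + 1))
  rIn_pos := by positivity
  rIn_lt_rOut := lt_mul_of_one_lt_left (by positivity) one_lt_two

lemma tendsto_rOut_shrinkingBump (n : ℕ) :
    Filter.Tendsto (fun i => (shrinkingBump n i).rOut) Filter.atTop (nhds 0) := by
  simpa [shrinkingBump] using (tendsto_one_div_add_atTop_nhds_zero_nat (𝕜 := ℝ)).const_mul 2

lemma ae_tendsto_mollify_shrinkingBump {m : ℕ}
    (hU : ∀ α, ∑ i, α i ≤ m → LocallyIntegrable (U α) volume) :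
    ∀ᵐ x, ∀ α, ∑ i, α i ≤ m → Filter.Tendsto
      (fun i => mollify volume (shrinkingBump n i) (U α) x) Filter.atTop (nhds (U α x)) := by
  refine ae_all_iff.2 fun α => Filter.eventually_imp_distrib_left.2 fun hα => ?_
  exact ContDiffBump.ae_convolution_tendsto_right_of_locallyIntegrable (K := 2)
    (tendsto_rOut_shrinkingBump n) (Filter.Eventually.of_forall fun _ => le_rfl) (hU α hα)

end MollifiedJets

section MultiIndices

variable {n : ℕ}

lemma mem_mIdxLe {d : ℕ} {α : Fin n → ℕ} : α ∈ mIdxLe n d ↔ ∑ i, α i ≤ d := by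
  rw [mIdxLe, mem_filter, and_iff_right_iff_imp, Finset.mem_image]
  intro h
  have hle : ∀ i, α i ≤ d := fun i =>
    (single_le_sum (fun _ _ => Nat.zero_le _) (Finset.mem_univ i)).trans h
  exact ⟨fun i => ⟨α i, Nat.lt_succ_of_le (hle i)⟩, Finset.mem_univ _, rfl⟩

lemma filter_mIdxLe_eq_piAntidiag {d k : ℕ} (hk : k ≤ d) :
    (mIdxLe n d).filter (fun α => ∑ i, α i = k) = (univ : Finset (Fin n)).piAntidiag k := by
  ext α
  simp only [mem_filter, mem_mIdxLe, mem_piAntidiag, Finset.mem_univ, implies_true, and_true]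
  exact ⟨And.right, fun h => ⟨h.trans_le hk, h⟩⟩

lemma padeCoeff_mul_multinomial {N : ℕ} {α : Fin n → ℕ} (hα : ∑ i, α i ≤ N) :
    (padeCoeff N (∑ i, α i) : ℝ) * Nat.multinomial univ α
      = (2 * N - ∑ i, α i).factorial
        / ((N - ∑ i, α i).factorial * ∏ i, ((α i).factorial : ℝ)) := by
  have hspec : (∏ i, ((α i).factorial : ℝ)) * Nat.multinomial univ α = (∑ i, α i).factorial := by
    exact_mod_cast Nat.multinomial_spec univ α
  have hmult : (Nat.multinomial univ α : ℝ) ≠ 0 := by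
    exact_mod_cast (Nat.multinomial_pos univ α).ne'
  rw [padeCoeff_eq_factorial_div hα]
  push_cast
  rw [← hspec]
  field_simp

lemma twoPointDefect_eq_sum_range_succ (V : (Fin n → ℕ) → EuclideanSpace ℝ (Fin n) → ℝ) (N : ℕ)
    (x y : EuclideanSpace ℝ (Fin n)) :
    twoPointDefect V N x y = ∑ k ∈ range (N + 1), (padeCoeff N k : ℝ) *
      ((-1) ^ k * jetEval (V · y) (linForm (y - x) ^ k)
        - jetEval (V · x) (linForm (y - x) ^ k)) := by
  refine (sum_subset (range_mono (by omega)) fun k hk hkN => ?_).symm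
  rw [Finset.mem_range, not_lt] at hkN
  rw [padeCoeff_eq_zero hkN (mem_range_succ_iff.1 hk), Rat.cast_zero, zero_mul]

lemma sum_mIdxLe_eq_twoPointDefect_div (V : (Fin n → ℕ) → EuclideanSpace ℝ (Fin n) → ℝ) (N : ℕ)
    (x y : EuclideanSpace ℝ (Fin n)) (R : ℝ) :
    ∑ α ∈ mIdxLe n N, ((2 * N - ∑ i, α i).factorial : ℝ)
        / ((N - ∑ i, α i).factorial * ∏ i, ((α i).factorial : ℝ)) * (∏ i, (y i - x i) ^ α i)
        / R * ((-1 : ℝ) ^ (∑ i, α i) * V α y - V α x)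
      = twoPointDefect V N x y / R := by
  rw [twoPointDefect_eq_sum_range_succ, sum_div, ← sum_fiberwise_of_maps_to
    (g := fun α : Fin n → ℕ => ∑ i, α i) (t := range (N + 1))
    (fun α hα => mem_range_succ_iff.2 (mem_mIdxLe.1 hα))]
  refine sum_congr rfl fun k hk => ?_
  have hkN : k ≤ N := mem_range_succ_iff.1 hk
  rw [filter_mIdxLe_eq_piAntidiag hkN, jetEval_linForm_pow, jetEval_linForm_pow, mul_sum,
    ← sum_sub_distrib, mul_sum, sum_div]
  refine sum_congr rfl fun α hα => ?_
  obtain ⟨rfl, -⟩ := mem_piAntidiag.1 hα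
  rw [← padeCoeff_mul_multinomial hkN]
  simp only [PiLp.sub_apply]
  ring

end MultiIndices

section Sobolev

variable {n N : ℕ} {U : (Fin n → ℕ) → EuclideanSpace ℝ (Fin n) → ℝ}
  {G : EuclideanSpace ℝ (Fin n) → ℝ}

lemma maxFn_sum_abs_mollify_le {φ : ContDiffBump (0 : EuclideanSpace ℝ (Fin n))} {K : ℝ}
    (hφ : φ.rOut ≤ K * φ.rIn) {κ : Type*} {s : Finset κ} {f : κ → EuclideanSpace ℝ (Fin n) → ℝ}
    (hf : ∀ i ∈ s, LocallyIntegrable (f i) volume) (hG : ∀ i ∈ s, ∀ z, |f i z| ≤ G z)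
    (x : EuclideanSpace ℝ (Fin n)) :
    maxFn (fun z => ∑ i ∈ s, |mollify volume φ (f i) z|) x
      ≤ ENNReal.ofReal (#s * (2 * K) ^ n) * maxFn G x := by
  have hmeas : ∀ i ∈ s, AEMeasurable (mollify volume φ (f i)) := fun i hi =>
    (continuous_mollify (hf i hi)).aemeasurable
  calc maxFn (fun z => ∑ i ∈ s, |mollify volume φ (f i) z|) x
      ≤ ∑ i ∈ s, maxFn (mollify volume φ (f i)) x := maxFn_sum_abs_le s _ hmeas x
    _ ≤ ∑ _ ∈ s, ENNReal.ofReal ((2 * K) ^ n) * maxFn G x := by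
        refine sum_le_sum fun i hi =>
          (maxFn_mollify_le hφ (hf i hi).aestronglyMeasurable x).trans ?_
        gcongr
        exact maxFn_mono
          (fun z => enorm_le_iff_norm_le.2 ((hG i hi z).trans (Real.le_norm_self _))) x
    _ = ENNReal.ofReal (#s * (2 * K) ^ n) * maxFn G x := by
        rw [sum_const, nsmul_eq_mul, ENNReal.ofReal_mul (by positivity), ENNReal.ofReal_natCast,
          mul_assoc]

/-- The constant of the pointwise estimate for Sobolev functions: `defectConst` times the cost
of replacing the top-order derivatives by their mollifications in the maximal function. -/
noncomputable def sobolevDefectConst (n N : ℕ) : ℝ :=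
  defectConst n N * (#((univ : Finset (Fin n)).piAntidiag (2 * N + 1)) * (2 * 2) ^ n)

lemma sobolevDefectConst_nonneg (n N : ℕ) : 0 ≤ sobolevDefectConst n N :=
  mul_nonneg (defectConst_nonneg n N) (by positivity)

lemma enorm_twoPointDefect_mollify_le (i : ℕ)
    (hU : ∀ α, ∑ i, α i ≤ 2 * N + 1 → LocallyIntegrable (U α) volume)
    (hW : ∀ α i, ∑ j, α j < 2 * N + 1 → IsWeakDeriv i (U α) (U (α + Pi.single i 1)))
    (hG : ∀ α, ∑ i, α i = 2 * N + 1 → ∀ z, |U α z| ≤ G z) (x y : EuclideanSpace ℝ (Fin n)) :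
    ‖twoPointDefect (fun α => mollify volume (shrinkingBump n i) (U α)) N x y‖ₑ
      ≤ ENNReal.ofReal (sobolevDefectConst n N * ‖y - x‖ ^ (2 * N + 1)) *
        (maxFn G x + maxFn G y) := by
  set S := (univ : Finset (Fin n)).piAntidiag (2 * N + 1)
  set φ := shrinkingBump n i
  have hS : ∀ α, α ∈ S ↔ ∑ i, α i = 2 * N + 1 := fun α => by simp [S]
  have hjet := isClassicalJet_mollify φ hU hW
  have hmax : ∀ w, maxFn (fun z => ∑ α ∈ S, |mollify volume φ (U α) z|) w
      ≤ ENNReal.ofReal (#S * (2 * 2) ^ n) * maxFn G w :=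
    maxFn_sum_abs_mollify_le le_rfl (fun α hα => hU α ((hS α).1 hα).le)
      (fun α hα => hG α ((hS α).1 hα))
  have hmeas : Measurable fun z => ∑ α ∈ S, |mollify volume φ (U α) z| :=
    (continuous_finsetSum _ fun α hα => (hjet.continuous α ((hS α).1 hα).le).abs).measurable
  calc ‖twoPointDefect (fun α => mollify volume φ (U α)) N x y‖ₑ
      ≤ ENNReal.ofReal (defectConst n N * ‖y - x‖ ^ (2 * N + 1)) *
          (maxFn (fun z => ∑ α ∈ S, |mollify volume φ (U α) z|) x
            + maxFn (fun z => ∑ α ∈ S, |mollify volume φ (U α) z|) y) :=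
        hjet.enorm_twoPointDefect_le_maxFn hmeas (fun w α hα => single_le_sum
          (f := fun α => |mollify volume φ (U α) w|) (fun _ _ => abs_nonneg _) ((hS α).2 hα)) x y
    _ ≤ ENNReal.ofReal (defectConst n N * ‖y - x‖ ^ (2 * N + 1)) *
          (ENNReal.ofReal (#S * (2 * 2) ^ n) * maxFn G x
            + ENNReal.ofReal (#S * (2 * 2) ^ n) * maxFn G y) := by
        gcongr <;> apply hmax
    _ = ENNReal.ofReal (sobolevDefectConst n N * ‖y - x‖ ^ (2 * N + 1)) *
          (maxFn G x + maxFn G y) := by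
        have hconst := defectConst_nonneg n N
        rw [← mul_add, ← mul_assoc, ← ENNReal.ofReal_mul (by positivity), mul_right_comm]
        rfl

lemma ae_enorm_twoPointDefect_le
    (hU : ∀ α, ∑ i, α i ≤ 2 * N + 1 → LocallyIntegrable (U α) volume)
    (hW : ∀ α i, ∑ j, α j < 2 * N + 1 → IsWeakDeriv i (U α) (U (α + Pi.single i 1)))
    (hG : ∀ α, ∑ i, α i = 2 * N + 1 → ∀ z, |U α z| ≤ G z) :
    ∀ᵐ p : EuclideanSpace ℝ (Fin n) × EuclideanSpace ℝ (Fin n) ∂volume.prod volume,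
      ‖twoPointDefect U N p.1 p.2‖ₑ
        ≤ ENNReal.ofReal (sobolevDefectConst n N * ‖p.2 - p.1‖ ^ (2 * N + 1)) *
          (maxFn G p.1 + maxFn G p.2) := by
  have hlim := ae_tendsto_mollify_shrinkingBump hU
  filter_upwards [Measure.quasiMeasurePreserving_fst.ae hlim,
    Measure.quasiMeasurePreserving_snd.ae hlim] with p hx hy
  have hdefect := tendsto_twoPointDefect (N := N) (fun α hα => hx α (by omega))
    (fun α hα => hy α (by omega))
  exact le_of_tendsto' hdefect.enorm fun i => enorm_twoPointDefect_mollify_le i hU hW hG p.1 p.2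

lemma abs_le_sqrt_sum_filter_mIdxLe (U : (Fin n → ℕ) → EuclideanSpace ℝ (Fin n) → ℝ) {m : ℕ}
    {α : Fin n → ℕ} (hα : ∑ i, α i = m) (z : EuclideanSpace ℝ (Fin n)) :
    |U α z| ≤ √(∑ β ∈ (mIdxLe n m).filter (fun β => ∑ i, β i = m), U β z ^ 2) :=
  Real.abs_le_sqrt (single_le_sum (f := fun β => U β z ^ 2) (fun _ _ => sq_nonneg _)
    (mem_filter.2 ⟨mem_mIdxLe.2 hα.le, hα⟩))

lemma enorm_div_le_of_enorm_le_ofReal_mul {a A C R : ℝ} {M : ℝ≥0∞} (hR : 0 ≤ R) (hAC : A ≤ C)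
    (h : ‖a‖ₑ ≤ ENNReal.ofReal (A * R) * M) : ‖a / R‖ₑ ≤ ENNReal.ofReal C * M := by
  rcases hR.eq_or_lt with rfl | hR
  · simp
  rw [div_eq_mul_inv, enorm_mul, enorm_inv hR.ne', ← div_eq_mul_inv, Real.enorm_of_nonneg hR.le]
  refine ENNReal.div_le_of_le_mul (h.trans ?_)
  rw [ENNReal.ofReal_mul' hR.le, mul_right_comm]
  gcongr

end Sobolev

/-- Pointwise estimate for the higher-order difference quotient of a function
u ∈ W^{2ℓ−1,1}_loc(ℝⁿ) (whose weak derivatives D^α u are encoded by the family U,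
u = U 0) in terms of the maximal function of |∇^{2ℓ−1}u|. -/
theorem stmt15 {n : ℕ} (hn : 1 ≤ n) (ℓ : ℕ) (hℓ : 1 ≤ ℓ) :
    ∃ C : ℝ, 0 < C ∧
      ∀ (U : (Fin n → ℕ) → EuclideanSpace ℝ (Fin n) → ℝ),
      (∀ α : Fin n → ℕ, (∑ i, α i) ≤ 2*ℓ-1 → LocallyIntegrable (U α) volume) →
      (∀ (α : Fin n → ℕ) (i : Fin n), (∑ j, α j) < 2*ℓ-1 →
        IsWeakDeriv i (U α) (U (α + Pi.single i 1))) →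
      ∀ G : EuclideanSpace ℝ (Fin n) → ℝ,
      (G = fun z => Real.sqrt (∑ α ∈ (mIdxLe n (2*ℓ-1)).filter
          (fun α => (∑ i, α i) = 2*ℓ-1), (U α z)^2)) →
      ∀ᵐ (p : EuclideanSpace ℝ (Fin n) × EuclideanSpace ℝ (Fin n)) ∂((volume : Measure (EuclideanSpace ℝ (Fin n))).prod volume),
        ENNReal.ofReal
            |∑ α ∈ mIdxLe n (ℓ-1),
              (Nat.factorial (2*ℓ-2-(∑ i, α i)) : ℝ) /
                  ((Nat.factorial (ℓ-1-(∑ i, α i)) : ℝ) *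
                    ∏ i, (Nat.factorial (α i) : ℝ)) *
                (∏ i, (p.2 i - p.1 i) ^ (α i)) / ‖p.2 - p.1‖ ^ (2*ℓ-1) *
                ((-1:ℝ) ^ (∑ i, α i) * U α p.2 - U α p.1)|
          ≤ ENNReal.ofReal C * (maxFn G p.1 + maxFn G p.2) := by
  obtain ⟨N, rfl⟩ := Nat.exists_eq_add_of_le' hℓ
  simp only [show 2 * (N + 1) - 1 = 2 * N + 1 by omega, show 2 * (N + 1) - 2 = 2 * N by omega,
    Nat.add_sub_cancel]
  have hconst := sobolevDefectConst_nonneg n N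
  refine ⟨sobolevDefectConst n N + 1, by positivity, ?_⟩
  rintro U hU hW G rfl
  filter_upwards [ae_enorm_twoPointDefect_le hU hW fun α => abs_le_sqrt_sum_filter_mIdxLe U]
    with p hp
  rw [sum_mIdxLe_eq_twoPointDefect_div, ← Real.enorm_eq_ofReal_abs]
  exact enorm_div_le_of_enorm_le_ofReal_mul (by positivity) (by linarith) hp
end

section
/- Let 1 ≤ p ≤ q ≤ ∞, β > 1/q, γ > 0 with (1/γ)(1/q − β) + 1 − 1/p = 0. Then there exists C = C(p,q,β,γ) such that ‖ s^{−β} ∫_0^{s^γ} f(r) dr ‖_{L^q(0,∞)} ≤ C ‖f‖_{L^p(0,∞)} for every nonnegative measurable f on (0,∞). -/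
open Set MeasureTheory
open scoped ENNReal

/-!
Write `G t = ∫_0^t |f|`. The substitution `t = s ^ γ` reduces the inequality to `γ = 1`. Hölder's
inequality on `(0, t)` gives `G t ≤ t ^ (1 - 1/p) * ‖f‖_p`, which is already the case `q = ∞`. For
`q < ∞` apply this bound to the factor `G ^ (q - p)` of `G ^ q = G ^ p * G ^ (q - p)`: what remains
is Hardy's inequality `∫ (G t / t) ^ p dt ≤ (p / (p - 1)) ^ p * ∫ |f| ^ p`, which follows from
Jensen's inequality for a power weight on `(0, t)` and Tonelli's theorem.
-/

section PowerIntegrals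

lemma setLIntegral_Ioo_zero_rpow {c t : ℝ} (hc : 0 < c) (ht : 0 ≤ t) :
    ∫⁻ r in Ioo 0 t, ENNReal.ofReal (r ^ (c - 1)) = ENNReal.ofReal (t ^ c / c) := by
  have hint : IntegrableOn (fun r : ℝ => r ^ (c - 1)) (Ioo 0 t) :=
    (intervalIntegrable_iff_integrableOn_Ioo_of_le ht).1
      (intervalIntegral.intervalIntegrable_rpow' (by linarith))
  rw [← ofReal_integral_eq_lintegral_ofReal hint, ← integral_Ioc_eq_integral_Ioo,
    ← intervalIntegral.integral_of_le ht, integral_rpow (Or.inl (by linarith)), sub_add_cancel,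
    Real.zero_rpow hc.ne', sub_zero]
  filter_upwards [ae_restrict_mem measurableSet_Ioo] with r hr
  exact Real.rpow_nonneg hr.1.le _

lemma setLIntegral_Ioi_rpow {c b : ℝ} (hc : 0 < c) (hb : 0 < b) :
    ∫⁻ s in Ioi b, ENNReal.ofReal (s ^ (-1 - c)) = ENNReal.ofReal (b ^ (-c) / c) := by
  have hlt : -1 - c < -1 := by linarith
  rw [← ofReal_integral_eq_lintegral_ofReal (integrableOn_Ioi_rpow_of_lt hlt hb),
    integral_Ioi_rpow_of_lt hlt hb, show -1 - c + 1 = -c by ring, neg_div_neg_eq]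
  filter_upwards [ae_restrict_mem measurableSet_Ioi] with s hs
  exact Real.rpow_nonneg (hb.trans hs).le _

lemma setLIntegral_Ioi_comp_rpow {γ : ℝ} (hγ : 0 < γ) (F : ℝ → ℝ≥0∞) :
    ∫⁻ s in Ioi 0, ENNReal.ofReal (γ * s ^ (γ - 1)) * F (s ^ γ) = ∫⁻ t in Ioi 0, F t := by
  have himage : (· ^ γ) '' Ioi (0 : ℝ) = Ioi 0 := by
    rw [(Real.continuous_rpow_const hγ.le).continuousOn.image_Ioi_of_strictMonoOn
      (Real.strictMonoOn_rpow_Ici_of_exponent_pos hγ) (tendsto_rpow_atTop hγ),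
      Real.zero_rpow hγ.ne']
  conv_rhs => rw [← himage]
  rw [lintegral_image_eq_lintegral_abs_deriv_mul measurableSet_Ioi
    (fun s hs => (Real.hasDerivAt_rpow_const (Or.inl (ne_of_gt hs))).hasDerivWithinAt)
    ((Real.rpow_left_injOn hγ.ne').mono Ioi_subset_Ici_self)]
  refine setLIntegral_congr_fun measurableSet_Ioi fun s (hs : 0 < s) => ?_
  rw [abs_of_nonneg (by positivity)]

lemma setLIntegral_Ioi_rpow_mul_comp_rpow {γ : ℝ} (hγ : 0 < γ) (c : ℝ) (F : ℝ → ℝ≥0∞) :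
    ∫⁻ s in Ioi 0, ENNReal.ofReal (s ^ (-1 - γ * c)) * F (s ^ γ) =
      ENNReal.ofReal γ⁻¹ * ∫⁻ t in Ioi 0, ENNReal.ofReal (t ^ (-1 - c)) * F t := by
  rw [← setLIntegral_Ioi_comp_rpow hγ (fun t => ENNReal.ofReal (t ^ (-1 - c)) * F t),
    ← lintegral_const_mul' _ _ ENNReal.ofReal_ne_top]
  refine setLIntegral_congr_fun measurableSet_Ioi fun s (hs : 0 < s) => ?_
  have hpow : s ^ (-1 - γ * c) = γ⁻¹ * (γ * s ^ (γ - 1) * (s ^ γ) ^ (-1 - c)) := by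
    rw [mul_assoc, inv_mul_cancel_left₀ hγ.ne', ← Real.rpow_mul hs.le, ← Real.rpow_add hs]
    ring_nf
  rw [hpow, ENNReal.ofReal_mul (by positivity), ENNReal.ofReal_mul (by positivity)]
  ring

end PowerIntegrals

section Tonelli

variable {α : Type*} [TopologicalSpace α] [LinearOrder α] [OrderClosedTopology α]
  [SecondCountableTopology α] [MeasurableSpace α] [OpensMeasurableSpace α]

lemma lintegral_mul_setLIntegral_Iio {μ ν : Measure α} [SFinite μ] [SFinite ν]
    {h k : α → ℝ≥0∞} (hh : AEMeasurable h μ) (hk : AEMeasurable k ν) :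
    ∫⁻ s, h s * ∫⁻ r in Iio s, k r ∂ν ∂μ = ∫⁻ r, k r * ∫⁻ s in Ioi r, h s ∂μ ∂ν := by
  let T : Set (α × α) := {z | z.2 < z.1}
  have hT : MeasurableSet T := measurableSet_lt measurable_snd measurable_fst
  have hmeas : AEMeasurable (T.indicator fun z => h z.1 * k z.2) (μ.prod ν) :=
    (hh.comp_fst.mul hk.comp_snd).indicator hT
  calc ∫⁻ s, h s * ∫⁻ r in Iio s, k r ∂ν ∂μ
      = ∫⁻ s, ∫⁻ r, T.indicator (fun z => h z.1 * k z.2) (s, r) ∂ν ∂μ := by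
        refine lintegral_congr fun s => ?_
        rw [← lintegral_const_mul'' _ hk.restrict, ← lintegral_indicator measurableSet_Iio]
        rfl
    _ = ∫⁻ r, ∫⁻ s, T.indicator (fun z => h z.1 * k z.2) (s, r) ∂μ ∂ν :=
        lintegral_lintegral_swap hmeas
    _ = ∫⁻ r, k r * ∫⁻ s in Ioi r, h s ∂μ ∂ν := by
        refine lintegral_congr fun r => ?_
        simp_rw [← lintegral_const_mul'' _ hh.restrict, ← lintegral_indicator measurableSet_Ioi,
          mul_comm (k r)]
        rfl

lemma setLIntegral_Ioi_mul_setLIntegral_Ioo {μ ν : Measure α} [SFinite μ] [SFinite ν] {a : α}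
    {h k : α → ℝ≥0∞} (hh : AEMeasurable h (μ.restrict (Ioi a)))
    (hk : AEMeasurable k (ν.restrict (Ioi a))) :
    ∫⁻ s in Ioi a, h s * ∫⁻ r in Ioo a s, k r ∂ν ∂μ =
      ∫⁻ r in Ioi a, k r * ∫⁻ s in Ioi r, h s ∂μ ∂ν := by
  have hswap := lintegral_mul_setLIntegral_Iio hh hk
  simp only [Measure.restrict_restrict measurableSet_Iio,
    Measure.restrict_restrict measurableSet_Ioi, Iio_inter_Ioi, Ioi_inter_Ioi] at hswap
  rw [hswap]
  refine setLIntegral_congr_fun measurableSet_Ioi fun r (hr : a < r) => ?_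
  rw [sup_of_le_left hr.le]

end Tonelli

section Jensen

variable {α : Type*} [MeasurableSpace α] {μ : Measure α} {p : ℝ}

lemma rpow_lintegral_le (hp : 1 ≤ p) {g : α → ℝ≥0∞} (hg : AEMeasurable g μ) :
    (∫⁻ x, g x ∂μ) ^ p ≤ μ univ ^ (p - 1) * ∫⁻ x, g x ^ p ∂μ := by
  have hp0 : 0 < p := one_pos.trans_le hp
  have hnorm := eLpNorm'_le_eLpNorm'_mul_rpow_measure_univ one_pos hp hg.aestronglyMeasurable
  simp only [eLpNorm'_eq_lintegral_enorm, enorm_eq_self, ENNReal.rpow_one, div_one] at hnorm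
  calc (∫⁻ x, g x ∂μ) ^ p
      ≤ ((∫⁻ x, g x ^ p ∂μ) ^ (1 / p) * μ univ ^ (1 - 1 / p)) ^ p := by gcongr
    _ = μ univ ^ (p - 1) * ∫⁻ x, g x ^ p ∂μ := by
        rw [ENNReal.mul_rpow_of_nonneg _ _ hp0.le, ← ENNReal.rpow_mul, ← ENNReal.rpow_mul,
          one_div_mul_cancel hp0.ne', ENNReal.rpow_one, sub_mul, one_div_mul_cancel hp0.ne',
          one_mul, mul_comm]

lemma rpow_lintegral_mul_le (hp : 1 ≤ p) {w g : α → ℝ≥0∞} (hw : AEMeasurable w μ)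
    (hg : AEMeasurable g μ) :
    (∫⁻ x, w x * g x ∂μ) ^ p ≤ (∫⁻ x, w x ∂μ) ^ (p - 1) * ∫⁻ x, w x * g x ^ p ∂μ := by
  have hjensen := rpow_lintegral_le hp (hg.mono_ac (withDensity_absolutelyContinuous μ w))
  rw [lintegral_withDensity_eq_lintegral_mul₀ hw hg,
    lintegral_withDensity_eq_lintegral_mul₀ hw (hg.pow_const p),
    withDensity_apply _ MeasurableSet.univ, Measure.restrict_univ] at hjensen
  exact hjensen

end Jensen

section Hardy

variable {p : ℝ} {g : ℝ → ℝ≥0∞}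

lemma rpow_setLIntegral_Ioo_le (hp : 1 ≤ p) {c t : ℝ} (hc : 0 < c) (ht : 0 ≤ t)
    (hg : AEMeasurable g (volume.restrict (Ioo 0 t))) :
    (∫⁻ r in Ioo 0 t, g r) ^ p ≤ ENNReal.ofReal ((t ^ c / c) ^ (p - 1)) *
      ∫⁻ r in Ioo 0 t, ENNReal.ofReal (r ^ ((1 - c) * (p - 1))) * g r ^ p := by
  have hfactor : ∫⁻ r in Ioo 0 t, g r = ∫⁻ r in Ioo 0 t,
      ENNReal.ofReal (r ^ (c - 1)) * (ENNReal.ofReal (r ^ (1 - c)) * g r) := by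
    refine setLIntegral_congr_fun measurableSet_Ioo fun r hr => ?_
    rw [← mul_assoc, ← ENNReal.ofReal_mul (Real.rpow_nonneg hr.1.le _), ← Real.rpow_add hr.1]
    simp
  have hpow : ∫⁻ r in Ioo 0 t,
        ENNReal.ofReal (r ^ (c - 1)) * (ENNReal.ofReal (r ^ (1 - c)) * g r) ^ p =
      ∫⁻ r in Ioo 0 t, ENNReal.ofReal (r ^ ((1 - c) * (p - 1))) * g r ^ p := by
    refine setLIntegral_congr_fun measurableSet_Ioo fun r hr => ?_
    have hr0 : 0 < r := hr.1
    rw [ENNReal.mul_rpow_of_nonneg _ _ (by linarith),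
      ENNReal.ofReal_rpow_of_nonneg (by positivity) (by linarith), ← mul_assoc,
      ← ENNReal.ofReal_mul (by positivity), ← Real.rpow_mul hr0.le, ← Real.rpow_add hr0]
    ring_nf
  rw [hfactor, ← hpow, ← ENNReal.ofReal_rpow_of_nonneg (by positivity) (by linarith),
    ← setLIntegral_Ioo_zero_rpow hc ht]
  exact rpow_lintegral_mul_le hp (by fun_prop) (by fun_prop)

lemma rpow_mul_rpow_setLIntegral_Ioo_le (hp : 1 ≤ p) {c t : ℝ} (hc : 0 < c) (ht : 0 < t)
    (hg : AEMeasurable g (volume.restrict (Ioo 0 t))) :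
    ENNReal.ofReal (t ^ (-1 - c * p)) * (∫⁻ r in Ioo 0 t, g r) ^ p ≤
      ENNReal.ofReal (c⁻¹ ^ (p - 1)) * (ENNReal.ofReal (t ^ (-1 - c)) *
        ∫⁻ r in Ioo 0 t, ENNReal.ofReal (r ^ ((1 - c) * (p - 1))) * g r ^ p) := by
  have hpow : t ^ (-1 - c * p) * (t ^ c / c) ^ (p - 1) = c⁻¹ ^ (p - 1) * t ^ (-1 - c) := by
    rw [div_eq_mul_inv, Real.mul_rpow (by positivity) (by positivity), ← Real.rpow_mul ht.le,
      ← mul_assoc, ← Real.rpow_add ht, mul_comm]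
    ring_nf
  grw [rpow_setLIntegral_Ioo_le hp hc ht.le hg]
  rw [← mul_assoc, ← mul_assoc, ← ENNReal.ofReal_mul (by positivity), hpow,
    ENNReal.ofReal_mul (by positivity)]

theorem weighted_hardy_inequality (hp : 1 ≤ p) {a : ℝ} (ha : 0 < a)
    (hg : AEMeasurable g (volume.restrict (Ioi 0))) :
    ∫⁻ t in Ioi 0, ENNReal.ofReal (t ^ (-1 - a)) * (∫⁻ r in Ioo 0 t, g r) ^ p ≤
      ENNReal.ofReal ((p / a) ^ p) *
        ∫⁻ r in Ioi 0, ENNReal.ofReal (r ^ (p - 1 - a)) * g r ^ p := by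
  have hp0 : 0 < p := one_pos.trans_le hp
  -- Among the weights `r ^ (c - 1)` in Jensen's inequality, `c = a / p` gives the best constant.
  obtain ⟨c, hc, rfl⟩ : ∃ c, 0 < c ∧ a = c * p :=
    ⟨a / p, div_pos ha hp0, (div_mul_cancel₀ a hp0.ne').symm⟩
  have htail (r : ℝ) (hr : 0 < r) :
      ENNReal.ofReal (r ^ ((1 - c) * (p - 1))) * g r ^ p *
          ∫⁻ s in Ioi r, ENNReal.ofReal (s ^ (-1 - c)) =
        ENNReal.ofReal c⁻¹ * (ENNReal.ofReal (r ^ (p - 1 - c * p)) * g r ^ p) := by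
    have hexp : r ^ (p - 1 - c * p) = r ^ ((1 - c) * (p - 1)) * r ^ (-c) := by
      rw [← Real.rpow_add hr]
      ring_nf
    rw [setLIntegral_Ioi_rpow hc hr, hexp, div_eq_mul_inv, ENNReal.ofReal_mul (by positivity),
      ENNReal.ofReal_mul (by positivity)]
    ring
  have hconst : c⁻¹ ^ (p - 1) * c⁻¹ = (p / (c * p)) ^ p := by
    rw [Real.rpow_sub_one (by positivity), div_mul_cancel₀ _ (by positivity),
      div_mul_cancel_right₀ hp0.ne']
  grw [setLIntegral_mono' measurableSet_Ioi fun t ht =>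
    rpow_mul_rpow_setLIntegral_Ioo_le hp hc ht (hg.mono_set Ioo_subset_Ioi_self)]
  rw [lintegral_const_mul' _ _ ENNReal.ofReal_ne_top,
    setLIntegral_Ioi_mul_setLIntegral_Ioo (by fun_prop) (by fun_prop),
    setLIntegral_congr_fun measurableSet_Ioi htail,
    lintegral_const_mul' _ _ ENNReal.ofReal_ne_top, ← mul_assoc,
    ← ENNReal.ofReal_mul (by positivity), hconst]

theorem hardy_inequality (hp : 1 < p) (hg : AEMeasurable g (volume.restrict (Ioi 0))) :
    ∫⁻ t in Ioi 0, ENNReal.ofReal (t ^ (-p)) * (∫⁻ r in Ioo 0 t, g r) ^ p ≤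
      ENNReal.ofReal ((p / (p - 1)) ^ p) * ∫⁻ r in Ioi 0, g r ^ p := by
  simpa [show -1 - (p - 1) = -p by ring] using
    weighted_hardy_inequality hp.le (sub_pos.2 hp) hg

end Hardy

section LpBounds

variable {ε : Type*} [TopologicalSpace ε] [ContinuousENorm ε] {f : ℝ → ε} {p q : ℝ≥0∞}

lemma setLIntegral_Ioo_enorm_le (hp : 1 ≤ p)
    (hf : AEStronglyMeasurable f (volume.restrict (Ioi 0))) {t : ℝ} (ht : 0 < t) :
    ∫⁻ r in Ioo 0 t, ‖f r‖ₑ ≤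
      ENNReal.ofReal (t ^ (1 - p⁻¹.toReal)) * eLpNorm f p (volume.restrict (Ioi 0)) := by
  have hsub : volume.restrict (Ioo 0 t) ≤ volume.restrict (Ioi 0) :=
    Measure.restrict_mono Ioo_subset_Ioi_self le_rfl
  have hholder := eLpNorm_le_eLpNorm_mul_rpow_measure_univ hp (hf.mono_measure hsub)
  rw [eLpNorm_one_eq_lintegral_enorm] at hholder
  grw [hholder, eLpNorm_mono_measure f hsub, mul_comm]
  simp [ENNReal.ofReal_rpow_of_pos ht, ENNReal.toReal_inv]

lemma rpow_mul_setLIntegral_Ioo_enorm_rpow_le (hp : 1 ≤ p) (hpq : p ≤ q) (hq : q ≠ ∞)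
    (hf : AEStronglyMeasurable f (volume.restrict (Ioi 0))) {t : ℝ} (ht : 0 < t) :
    ENNReal.ofReal (t ^ (-1 - q.toReal * (1 - p⁻¹.toReal))) *
        (∫⁻ r in Ioo 0 t, ‖f r‖ₑ) ^ q.toReal ≤
      ENNReal.ofReal (t ^ (-p.toReal)) * (∫⁻ r in Ioo 0 t, ‖f r‖ₑ) ^ p.toReal *
        eLpNorm f p (volume.restrict (Ioi 0)) ^ (q.toReal - p.toReal) := by
  have hPQ : 0 ≤ q.toReal - p.toReal := sub_nonneg.2 (ENNReal.toReal_mono hq hpq)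
  have hP : 0 < p.toReal :=
    ENNReal.toReal_pos (one_pos.trans_le hp).ne' (ne_top_of_le_ne_top hq hpq)
  have hexp : t ^ (-p.toReal) = t ^ (-1 - q.toReal * (1 - p⁻¹.toReal)) *
      (t ^ (1 - p⁻¹.toReal)) ^ (q.toReal - p.toReal) := by
    rw [← Real.rpow_mul ht.le, ← Real.rpow_add ht, ENNReal.toReal_inv]
    congr 1
    field_simp
    ring
  set G := ∫⁻ r in Ioo 0 t, ‖f r‖ₑ with hG
  have hsplit : G ^ q.toReal = G ^ p.toReal * G ^ (q.toReal - p.toReal) := by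
    rw [← ENNReal.rpow_add_of_nonneg _ _ hP.le hPQ, add_sub_cancel]
  have hholder := ENNReal.rpow_le_rpow (setLIntegral_Ioo_enorm_le hp hf ht) hPQ
  rw [ENNReal.mul_rpow_of_nonneg _ _ hPQ, ENNReal.ofReal_rpow_of_nonneg (by positivity) hPQ,
    ← hG] at hholder
  grw [hsplit, hholder]
  rw [hexp, ENNReal.ofReal_mul (by positivity)]
  exact le_of_eq (by ring)

theorem lintegral_rpow_mul_setLIntegral_Ioo_enorm_rpow_le (hp : 1 < p) (hpq : p ≤ q) (hq : q ≠ ∞)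
    (hf : AEStronglyMeasurable f (volume.restrict (Ioi 0))) :
    ∫⁻ t in Ioi 0, ENNReal.ofReal (t ^ (-1 - q.toReal * (1 - p⁻¹.toReal))) *
        (∫⁻ r in Ioo 0 t, ‖f r‖ₑ) ^ q.toReal ≤
      ENNReal.ofReal ((p.toReal / (p.toReal - 1)) ^ p.toReal) *
        eLpNorm f p (volume.restrict (Ioi 0)) ^ q.toReal := by
  have hp_top : p ≠ ∞ := ne_top_of_le_ne_top hq hpq
  have hP : 1 < p.toReal := by simpa using (ENNReal.toReal_lt_toReal ENNReal.one_ne_top hp_top).2 hp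
  have hPQ : p.toReal ≤ q.toReal := ENNReal.toReal_mono hq hpq
  have hnorm : ∫⁻ r in Ioi 0, ‖f r‖ₑ ^ p.toReal =
      eLpNorm f p (volume.restrict (Ioi 0)) ^ p.toReal := by
    rw [eLpNorm_eq_lintegral_rpow_enorm_toReal (one_pos.trans hp).ne' hp_top, ← ENNReal.rpow_mul,
      one_div_mul_cancel (by positivity), ENNReal.rpow_one]
  have hG : Measurable fun t => ∫⁻ r in Ioo 0 t, ‖f r‖ₑ :=
    Monotone.measurable fun _ _ h => lintegral_mono_set (Ioo_subset_Ioo_right h)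
  grw [setLIntegral_mono' measurableSet_Ioi fun t ht =>
    rpow_mul_setLIntegral_Ioo_enorm_rpow_le hp.le hpq hq hf ht]
  rw [lintegral_mul_const _ (by fun_prop)]
  grw [hardy_inequality hP hf.enorm]
  rw [hnorm, mul_assoc, ← ENNReal.rpow_add_of_nonneg _ _ (by positivity) (sub_nonneg.2 hPQ),
    add_sub_cancel]

end LpBounds

section NormedSpace

variable {E : Type*} [NormedAddCommGroup E] [NormedSpace ℝ E] {f : ℝ → E} {p q : ℝ≥0∞} {β γ : ℝ}

lemma enorm_rpow_smul_setIntegral_le (β : ℝ) (A : Set ℝ) (f : ℝ → E) {s : ℝ} (hs : 0 ≤ s) :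
    ‖s ^ (-β) • ∫ r in A, f r‖ₑ ≤ ENNReal.ofReal (s ^ (-β)) * ∫⁻ r in A, ‖f r‖ₑ := by
  grw [enorm_smul, Real.enorm_of_nonneg (Real.rpow_nonneg hs _), enorm_integral_le_lintegral_enorm]

theorem eLpNorm_top_rpow_smul_setIntegral_Ioo_le (hp : 1 ≤ p)
    (hβ : β = γ * (1 - p⁻¹.toReal)) (hf : AEStronglyMeasurable f (volume.restrict (Ioi 0))) :
    eLpNorm (fun s : ℝ => s ^ (-β) • ∫ r in Ioo 0 (s ^ γ), f r) ∞ (volume.restrict (Ioi 0)) ≤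
      eLpNorm f p (volume.restrict (Ioi 0)) := by
  refine eLpNormEssSup_le_of_ae_enorm_bound ?_
  filter_upwards [ae_restrict_mem measurableSet_Ioi] with s (hs : 0 < s)
  have hcancel : s ^ (-β) * (s ^ γ) ^ (1 - p⁻¹.toReal) = 1 := by
    rw [← Real.rpow_mul hs.le, ← hβ, ← Real.rpow_add hs, neg_add_cancel, Real.rpow_zero]
  grw [enorm_rpow_smul_setIntegral_le β _ f hs.le,
    setLIntegral_Ioo_enorm_le hp hf (Real.rpow_pos_of_pos hs γ), ← mul_assoc,
    ← ENNReal.ofReal_mul (by positivity), hcancel, ENNReal.ofReal_one, one_mul]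

theorem eLpNorm_rpow_smul_setIntegral_Ioo_le (hp : 1 < p) (hpq : p ≤ q) (hq : q ≠ ∞) (hγ : 0 < γ)
    (hβ : β = q⁻¹.toReal + γ * (1 - p⁻¹.toReal))
    (hf : AEStronglyMeasurable f (volume.restrict (Ioi 0))) :
    eLpNorm (fun s : ℝ => s ^ (-β) • ∫ r in Ioo 0 (s ^ γ), f r) q (volume.restrict (Ioi 0)) ≤
      (ENNReal.ofReal γ⁻¹ * ENNReal.ofReal ((p.toReal / (p.toReal - 1)) ^ p.toReal)) ^
        (1 / q.toReal) * eLpNorm f p (volume.restrict (Ioi 0)) := by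
  have hq0 : q ≠ 0 := ((one_pos.trans hp).trans_le hpq).ne'
  have hQ : 0 < q.toReal := ENNReal.toReal_pos hq0 hq
  set G : ℝ → ℝ≥0∞ := fun t => ∫⁻ r in Ioo 0 t, ‖f r‖ₑ
  have hpoint (s : ℝ) (hs : 0 < s) :
      ‖s ^ (-β) • ∫ r in Ioo 0 (s ^ γ), f r‖ₑ ^ q.toReal ≤
        ENNReal.ofReal (s ^ (-1 - γ * (q.toReal * (1 - p⁻¹.toReal)))) *
          G (s ^ γ) ^ q.toReal := by
    have hexp : -β * q.toReal = -1 - γ * (q.toReal * (1 - p⁻¹.toReal)) := by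
      rw [hβ, ENNReal.toReal_inv]
      field_simp
      ring
    grw [enorm_rpow_smul_setIntegral_le β _ f hs.le]
    rw [ENNReal.mul_rpow_of_nonneg _ _ hQ.le,
      ENNReal.ofReal_rpow_of_nonneg (by positivity) hQ.le, ← Real.rpow_mul hs.le, hexp]
  rw [eLpNorm_eq_lintegral_rpow_enorm_toReal hq0 hq]
  grw [setLIntegral_mono' measurableSet_Ioi hpoint]
  rw [setLIntegral_Ioi_rpow_mul_comp_rpow hγ _ fun t => G t ^ q.toReal]
  grw [lintegral_rpow_mul_setLIntegral_Ioo_enorm_rpow_le hp hpq hq hf]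
  rw [← mul_assoc, ENNReal.mul_rpow_of_nonneg _ _ (by positivity), ← ENNReal.rpow_mul,
    mul_one_div_cancel hQ.ne', ENNReal.rpow_one]

end NormedSpace

theorem stmt17_general {E : Type*} [NormedAddCommGroup E] [NormedSpace ℝ E] [CompleteSpace E]
    (p q : ℝ≥0∞) (hp : 1 ≤ p) (hpq : p ≤ q) (β γ : ℝ) (hγ : 0 < γ) (hβ : q ≠ ∞ → q⁻¹.toReal < β)
    (hbal : (1 / γ) * (q⁻¹.toReal - β) + 1 - p⁻¹.toReal = 0) :
    ∃ C : ℝ, 0 < C ∧ ∀ f : ℝ → E, AEStronglyMeasurable f (volume.restrict (Ioi 0)) →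
      eLpNorm (fun s : ℝ => s ^ (-β) • ∫ r in Ioo 0 (s ^ γ), f r) q (volume.restrict (Ioi 0))
        ≤ ENNReal.ofReal C * eLpNorm f p (volume.restrict (Ioi 0)) := by
  have hβ_eq : β = q⁻¹.toReal + γ * (1 - p⁻¹.toReal) := by
    field_simp at hbal
    linarith
  rcases eq_or_ne q ∞ with rfl | hq
  · refine ⟨1, one_pos, fun f hf => ?_⟩
    rw [ENNReal.ofReal_one, one_mul]
    exact eLpNorm_top_rpow_smul_setIntegral_Ioo_le hp (by simpa using hβ_eq) hf
  · have hp1 : 1 < p := by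
      refine hp.lt_of_ne ?_
      rintro rfl
      exact (hβ hq).ne' (by simpa using hβ_eq)
    have hP : 1 < p.toReal := by
      simpa using (ENNReal.toReal_lt_toReal ENNReal.one_ne_top (ne_top_of_le_ne_top hq hpq)).2 hp1
    have hK : 0 < γ⁻¹ * (p.toReal / (p.toReal - 1)) ^ p.toReal :=
      mul_pos (inv_pos.2 hγ) (Real.rpow_pos_of_pos (div_pos (one_pos.trans hP) (sub_pos.2 hP)) _)
    refine ⟨_, Real.rpow_pos_of_pos hK (1 / q.toReal), fun f hf => ?_⟩
    rw [← ENNReal.ofReal_rpow_of_nonneg hK.le (by positivity), ENNReal.ofReal_mul (by positivity)]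
    exact eLpNorm_rpow_smul_setIntegral_Ioo_le hp1 hpq hq hγ hβ_eq hf

/-- Hardy-type inequality: if 1 ≤ p ≤ q ≤ ∞, β > 1/q, γ > 0 and
(1/γ)(1/q − β) + 1 − 1/p = 0, then
‖ s^{−β} ∫_0^{s^γ} f ‖_{L^q(0,∞)} ≤ C ‖f‖_{L^p(0,∞)} for nonnegative measurable f. -/
theorem stmt17 (p q : ℝ≥0∞) (hp : 1 ≤ p) (hpq : p ≤ q) (β γ : ℝ) (hγ : 0 < γ)
    (hβ : q⁻¹.toReal < β)
    (hbal : (1/γ) * (q⁻¹.toReal - β) + 1 - p⁻¹.toReal = 0) :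
    ∃ C : ℝ, 0 < C ∧ ∀ f : ℝ → ℝ, Measurable f → (∀ r, 0 ≤ f r) →
      eLpNorm (fun s : ℝ => s ^ (-β) * ∫ r in Ioo (0:ℝ) (s ^ γ), f r) q
          (volume.restrict (Ioi (0:ℝ)))
        ≤ ENNReal.ofReal C * eLpNorm f p (volume.restrict (Ioi (0:ℝ))) := by
  obtain ⟨C, hC, hbound⟩ := stmt17_general (E := ℝ) p q hp hpq β γ hγ (fun _ => hβ) hbal
  exact ⟨C, hC, fun f hf _ => hbound f hf.aestronglyMeasurable⟩
end
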